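/- arXiv:2103.07650 — 2 statements merged into one kernel-verified Lean document; each statement's English description precedes it below -/
import Mathlib

section
/- Let n ≥ 2 and p ∈ (2, ∞). Then there exists a constant C > 0 such that for every v ∈ C_c^∞(ℝⁿ), ‖ |x|^{(n−1)(1/2−1/p)} v ‖_{p,2} ≤ C ‖ |D|^{1/2−1/p} v ‖_{L²(ℝⁿ)}. -/
/-!
Put `s = 1/2 - 1/p` and `radN v r = r^{(n-1)/2} ‖v(r·)‖_{L²(S^{n-1})}`. The weight and the polar
density combine so that the left-hand side is the `L^p(dr)` norm of `radN v` (`mixN_eq`), while the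
`L²(dr)` norm of `radN v` is `‖v‖_{L²(ℝⁿ)}` (`lintegral_radN_sq`).

The fundamental theorem of calculus along rays gives the trace inequality
`radN f r ^ 2 ≤ 2 ‖f‖₂ ∑ j, ‖∂_j f‖₂`, uniformly in `r` (`radN_trace`). For frequencies in
`|ξ| ≤ B`, Plancherel turns it into `radN f r ≲ B^{1/2} ‖f‖₂` (`radN_band`). Summing over dyadic
blocks, the part of `v` of frequency `≲ A` satisfies `radN ≤ K A^{1/2-s} ‖|D|^s v‖₂`; the geometric
series converges because `s < 1/2` (`exists_low`).

The `L^p` bound follows by real interpolation at the level of distribution functions.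
For each `t > 0` choose `A` so that the low-frequency part is at most `t / 2`, that is
`A^{1/p} = t / (2 K ‖|D|^s v‖₂)`. On `{radN v > t}` the high-frequency part exceeds `t / 2`, so
Chebyshev and Plancherel bound the measure by `4 t^{-2} ∫_{|ξ| ≥ A} |v̂|²` (`meas_level`). The
layer-cake formula and Tonelli give `∫ (radN v)^p dr ≲ ‖|D|^s v‖₂^{p-2} ∫ |ξ|^{2s} |v̂|² dξ`
(`lintegral_radN_rpow`), which is the claim.
-/

open MeasureTheory Real ENNReal FourierTransform
open scoped ContDiff

noncomputable section

/-- Euclidean space ℝⁿ. -/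
abbrev Spc (n : ℕ) := EuclideanSpace ℝ (Fin n)

/-- Space-time ℝ × ℝⁿ. -/
abbrev STn (n : ℕ) := ℝ × Spc n

variable {n : ℕ}

/-- Directional derivative in the space-time direction `v`. -/
def dirD (v : STn n) (f : STn n → ℝ) : STn n → ℝ := fun p => fderiv ℝ f p v

/-- Time derivative ∂_t. -/
def dtD : (STn n → ℝ) → STn n → ℝ := dirD (1, 0)

/-- Spatial derivative ∂_j. -/
def dxD (j : Fin n) : (STn n → ℝ) → STn n → ℝ := dirD (0, EuclideanSpace.single j 1)

/-- Spatial Laplacian. -/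
def lapD (f : STn n → ℝ) : STn n → ℝ := fun p => ∑ j, dxD j (dxD j f) p

/-- d'Alembertian □ = ∂_t² − Δ. -/
def boxD (f : STn n → ℝ) : STn n → ℝ := fun p => dtD (dtD f) p - lapD f p

/-- Lorentz boost L_j = t ∂_j + x_j ∂_t. -/
def LD (j : Fin n) (f : STn n → ℝ) : STn n → ℝ := fun p => p.1 * dxD j f p + p.2 j * dtD f p

/-- Rotation Ω_{jk} = x_j ∂_k − x_k ∂_j. -/
def RotD (j k : Fin n) (f : STn n → ℝ) : STn n → ℝ := fun p => p.2 j * dxD k f p - p.2 k * dxD j f p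

/-- Scaling S = t ∂_t + x·∇. -/
def SD (f : STn n → ℝ) : STn n → ℝ := fun p => p.1 * dtD f p + ∑ j, p.2 j * dxD j f p

/-- Index type for the Klainerman vector fields. -/
def GIdx (n : ℕ) := Option (Fin n) ⊕ Fin n ⊕ (Fin n × Fin n) ⊕ Unit

instance : Fintype (GIdx n) := by unfold GIdx; infer_instance
instance : DecidableEq (GIdx n) := by unfold GIdx; infer_instance

/-- The Klainerman vector field with index `i`. -/
def Gop : GIdx n → (STn n → ℝ) → STn n → ℝ
  | Sum.inl none => dtD
  | Sum.inl (some j) => dxD j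
  | Sum.inr (Sum.inl j) => LD j
  | Sum.inr (Sum.inr (Sum.inl jk)) => RotD jk.1 jk.2
  | Sum.inr (Sum.inr (Sum.inr _)) => SD

/-- Iterated composition Γ^α along a word of indices. -/
def GwL : List (GIdx n) → (STn n → ℝ) → STn n → ℝ
  | [], f => f
  | a :: l, f => Gop a (GwL l f)

/-- Sum of a quantity over all products of at most `N` Klainerman vector fields. -/
def SumW (N : ℕ) (Φ : (STn n → ℝ) → ℝ≥0∞) (f : STn n → ℝ) : ℝ≥0∞ :=
  ∑ m ∈ Finset.range (N + 1), ∑ w : Fin m → GIdx n, Φ (GwL (List.ofFn w) f)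

/-- Pointwise norm of the full space-time gradient ∂u = (∂_t u, ∇_x u). -/
def gradN (f : STn n → ℝ) (p : STn n) : ℝ := Real.sqrt ((dtD f p) ^ 2 + ∑ j, (dxD j f p) ^ 2)

/-- Fourier transform (in space) of a real valued function. -/
def fourierS (g : Spc n → ℝ) : Spc n → ℂ := 𝓕 (fun x => (g x : ℂ))

/-- ‖ |D|^s g ‖_{L²}, i.e. the L² norm of ξ ↦ |ξ|^s (ℱ g)(ξ). -/
def DsN (s : ℝ) (g : Spc n → ℝ) : ℝ≥0∞ :=
  eLpNorm (fun ξ : Spc n => ‖ξ‖ ^ s * ‖fourierS g ξ‖) 2 volume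

/-- The surface measure on the unit sphere of ℝⁿ. -/
def sphM (n : ℕ) : Measure (Metric.sphere (0 : Spc n) 1) := (volume : Measure (Spc n)).toSphere

/-- The L^q norm of g(r ω) over the unit sphere. -/
def sphN (n : ℕ) (q : ℝ) (g : Spc n → ℝ) (r : ℝ) : ℝ≥0∞ :=
  (∫⁻ o, (‖g (r • (o : Spc n))‖₊ : ℝ≥0∞) ^ q ∂(sphM n)) ^ (1 / q)

/-- The mixed norm ‖g‖_{p,q} = (∫_0^∞ ‖g(r·)‖_{L^q(S^{n-1})}^p r^{n-1} dr)^{1/p}. -/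
def mixN (n : ℕ) (p q : ℝ) (g : Spc n → ℝ) : ℝ≥0∞ :=
  (∫⁻ r in Set.Ioi (0 : ℝ), (sphN n q g r) ^ p * ENNReal.ofReal (r ^ (n - 1))) ^ (1 / p)

/-- A space-time function which is Schwartz in the space variable for each fixed time. -/
def SchwartzInX (v : STn n → ℝ) : Prop :=
  ∀ t : ℝ, ∃ φ : SchwartzMap (Spc n) ℝ, ∀ x, v (t, x) = φ x

/-- The space-time partial derivatives ∂_0 = ∂_t, ∂_j (j = 1,2,3) on ℝ × ℝ³. -/
def pd4 (α : Fin 4) : (STn 3 → ℝ) → STn 3 → ℝ := Fin.cases dtD (fun j => dxD j) α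

/-- The null condition for a set of coefficients {A^{αβ}}. -/
def NullCond (A : Fin 4 → Fin 4 → ℝ) : Prop :=
  ∀ X : Fin 4 → ℝ, (X 0) ^ 2 = (X 1) ^ 2 + (X 2) ^ 2 + (X 3) ^ 2 →
    ∑ α, ∑ β, A α β * X α * X β = 0

/-- The null form A^{αβ} (∂_α v)(∂_β w). -/
def QF (A : Fin 4 → Fin 4 → ℝ) (v w : STn 3 → ℝ) (p : STn 3) : ℝ :=
  ∑ α, ∑ β, A α β * pd4 α v p * pd4 β w p

/-- The good derivative T_j = ∂_j + (x_j/|x|) ∂_t. -/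
def TD (j : Fin 3) (f : STn 3 → ℝ) (p : STn 3) : ℝ := dxD j f p + (p.2 j / ‖p.2‖) * dtD f p

end

section aux
open scoped SchwartzMap LineDeriv
open Metric Set

/-! ### Polar coordinates and the weighted spherical norm -/

/-- The weighted spherical norm `r^{(n-1)/2} ‖f(r·)‖_{L²(S^{n-1})}`. The weight is the square root
of the polar density, so the `L²(dr)` norm of `radN f` is the `L²(ℝⁿ)` norm of `f`. -/
noncomputable def radN {n : ℕ} (f : Spc n → ℂ) (r : ℝ) : ℝ≥0∞ :=
  ENNReal.ofReal (r ^ (((n : ℝ) - 1) / 2)) *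
    eLpNorm (fun o : sphere (0 : Spc n) 1 => f (r • (o : Spc n))) 2 (sphM n)

instance (n : ℕ) : IsFiniteMeasure (sphM n) := by unfold sphM; infer_instance

lemma lintegral_polar {n : ℕ} (hn : 2 ≤ n) {f : Spc n → ℝ≥0∞} (hf : Measurable f) :
    ∫⁻ x, f x = ∫⁻ o, (∫⁻ r in Ioi (0 : ℝ),
      ENNReal.ofReal (r ^ (n - 1)) * f (r • (o : Spc n))) ∂(sphM n) := by
  have hnt : Nontrivial (Spc n) := by
    have : Nonempty (Fin n) := ⟨⟨0, by omega⟩⟩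
    infer_instance
  have hmp := (volume : Measure (Spc n)).measurePreserving_homeomorphUnitSphereProd
  have h1 : ∫⁻ x, f x = ∫⁻ x : ({(0 : Spc n)}ᶜ : Set (Spc n)), f x ∂(volume.comap Subtype.val) := by
    rw [lintegral_subtype_comap (measurableSet_singleton _).compl, restrict_compl_singleton]
  rw [h1]
  have h2 := hmp.lintegral_comp_emb (Homeomorph.measurableEmbedding _)
    (fun z => f (((homeomorphUnitSphereProd (Spc n)).symm z : ({(0 : Spc n)}ᶜ : Set (Spc n))) : Spc n))
  simp only [Homeomorph.symm_apply_apply] at h2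
  rw [h2]
  simp only [homeomorphUnitSphereProd_symm_apply_coe]
  rw [lintegral_prod _ (by fun_prop)]
  unfold sphM
  refine lintegral_congr fun o => ?_
  rw [Measure.volumeIoiPow, lintegral_withDensity_eq_lintegral_mul _ (by fun_prop) (by fun_prop)]
  simp only [Pi.mul_apply, finrank_euclideanSpace, Fintype.card_fin]
  rw [lintegral_subtype_comap measurableSet_Ioi
    (fun r : ℝ => ENNReal.ofReal (r ^ (n - 1)) * f (r • (o : Spc n)))]

lemma eLpNorm_two_sq {α : Type*} [MeasurableSpace α] (μ : Measure α) (f : α → ℂ) :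
    eLpNorm f 2 μ ^ 2 = ∫⁻ x, ‖f x‖ₑ ^ 2 ∂μ := by
  have := eLpNorm_nnreal_pow_eq_lintegral (μ := μ) (p := 2) (f := f) (by norm_num)
  simpa using this

/-- The partial derivative `∂_j f` of a Schwartz function, again as a Schwartz function. -/
noncomputable def partialS {n : ℕ} (j : Fin n) (f : 𝓢(Spc n, ℂ)) : 𝓢(Spc n, ℂ) :=
  ∂_{(EuclideanSpace.single j (1 : ℝ) : Spc n)} f

lemma radN_sq {n : ℕ} (hn : 2 ≤ n) (f : Spc n → ℂ) {r : ℝ} (hr : 0 < r) :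
    radN f r ^ 2 = ∫⁻ o, ENNReal.ofReal (r ^ (n - 1)) * ‖f (r • (o : Spc n))‖ₑ ^ 2 ∂(sphM n) := by
  rw [radN, mul_pow, ← ENNReal.ofReal_pow (by positivity), lintegral_const_mul' _ _ (by simp)]
  congr 2
  · rw [← Real.rpow_natCast, ← Real.rpow_mul hr.le, ← Real.rpow_natCast]
    congr 1
    rw [Nat.cast_sub (by omega)]
    push_cast; ring
  · exact eLpNorm_two_sq _ _

lemma radN_add_le {n : ℕ} {f g : Spc n → ℂ} (hf : Continuous f) (hg : Continuous g) (r : ℝ) :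
    radN (f + g) r ≤ radN f r + radN g r := by
  unfold radN
  rw [← mul_add]
  gcongr
  exact eLpNorm_add_le (by fun_prop) (by fun_prop) (by norm_num)

lemma lintegral_radN_sq {n : ℕ} (hn : 2 ≤ n) {f : Spc n → ℂ} (hf : Continuous f) :
    ∫⁻ r in Ioi (0 : ℝ), radN f r ^ 2 = eLpNorm f 2 volume ^ 2 := by
  rw [eLpNorm_two_sq, lintegral_polar hn (by fun_prop), lintegral_lintegral_swap]
  · exact setLIntegral_congr_fun measurableSet_Ioi fun r (hr : 0 < r) => radN_sq hn f hr
  · have hfm := hf.measurable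
    simp only [Function.uncurry_def]
    exact Measurable.aemeasurable (by fun_prop)

/-! ### The trace inequality -/

/-- Along the ray through `o`, `|f(r o)|²` is at most the integral of `2 |f| |∂_r f|` over `(r, ∞)`,
since `f` vanishes at infinity; there `r^{n-1} ≤ t^{n-1}`, so the weight moves under the
integral. -/
lemma trace_pointwise {n : ℕ} (f : 𝓢(Spc n, ℂ)) (o : sphere (0 : Spc n) 1) {r : ℝ}
    (hr : 0 < r) :
    ENNReal.ofReal (r ^ (n - 1)) * ‖f (r • (o : Spc n))‖ₑ ^ 2 ≤
      ∫⁻ t in Ioi (0 : ℝ), ENNReal.ofReal (t ^ (n - 1)) *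
        (2 * ‖f (t • (o : Spc n))‖ₑ *
          ∑ j, ‖partialS j f (t • (o : Spc n))‖ₑ) := by
  set H : ℝ → ℝ≥0∞ := fun t => 2 * ‖f (t • (o : Spc n))‖ₑ *
          ∑ j, ‖partialS j f (t • (o : Spc n))‖ₑ with hH
  set h : ℝ → ℝ := fun t => ‖f (t • (o : Spc n))‖ ^ 2 with hh
  set h' : ℝ → ℝ := fun t => 2 * inner ℝ (f (t • (o : Spc n))) (fderiv ℝ f (t • (o : Spc n)) o)
    with hh'
  have hd : ∀ t, HasDerivAt h (h' t) t := by
    intro t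
    have h1 : HasDerivAt (fun t : ℝ => t • (o : Spc n)) (o : Spc n) t := by
      simpa using (hasDerivAt_id t).smul_const (o : Spc n)
    have h2 := (f.differentiableAt (x := t • (o : Spc n))).hasFDerivAt.comp_hasDerivAt t h1
    exact h2.norm_sq
  have hfd : Continuous (fderiv ℝ f) := (f.smooth 1).continuous_fderiv (by norm_num)
  have hc : Continuous h' := by
    have := f.continuous
    fun_prop
  have hle : ∀ t, ‖h' t‖ₑ ≤ H t := by
    intro t
    have e1 : fderiv ℝ f (t • (o : Spc n)) o =
        ∑ j, (o : Spc n) j • partialS j f (t • (o : Spc n)) := by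
      conv_lhs => arg 2; rw [← (EuclideanSpace.basisFun (Fin n) ℝ).sum_repr (o : Spc n)]
      simp [partialS, SchwartzMap.lineDerivOp_apply_eq_fderiv]
    have e2 : ‖fderiv ℝ f (t • (o : Spc n)) o‖ₑ ≤
        ∑ j, ‖partialS j f (t • (o : Spc n))‖ₑ := by
      rw [e1]
      refine (enorm_sum_le _ _).trans (Finset.sum_le_sum fun j _ => ?_)
      rw [enorm_smul]
      refine mul_le_of_le_one_left (by positivity) ?_
      have : ‖(o : Spc n) j‖ ≤ 1 := (PiLp.norm_apply_le (o : Spc n) j).trans (by simp)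
      rw [← ofReal_norm]
      simpa using this
    calc ‖h' t‖ₑ ≤ 2 * (‖f (t • (o : Spc n))‖ₑ * ‖fderiv ℝ f (t • (o : Spc n)) o‖ₑ) := by
          rw [hh']
          simp only [enorm_mul]
          gcongr
          · rw [← ofReal_norm]; simp
          · simp_rw [← ofReal_norm]
            rw [← ENNReal.ofReal_mul (by positivity)]
            exact ENNReal.ofReal_le_ofReal (norm_inner_le_norm _ _)
      _ ≤ H t := by
          rw [hH, ← mul_assoc]
          dsimp only
          gcongr
  have hH' : ∀ R, r ≤ R → ENNReal.ofReal (h r) ≤ ENNReal.ofReal (h R) + ∫⁻ t in Ioi r, H t := by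
    intro R hR
    have h1 : ∫ t in r..R, h' t = h R - h r :=
      intervalIntegral.integral_eq_sub_of_hasDerivAt (fun t _ => hd t) (hc.intervalIntegrable _ _)
    have h2 : h r ≤ h R + ‖∫ t in r..R, h' t‖ := by
      rw [h1, Real.norm_eq_abs, abs_sub_comm]
      linarith [le_abs_self (h r - h R)]
    refine (ENNReal.ofReal_le_ofReal h2).trans ?_
    rw [ENNReal.ofReal_add (by positivity) (by positivity)]
    gcongr
    rw [ofReal_norm, intervalIntegral.integral_of_le hR]
    refine (enorm_integral_le_lintegral_enorm _).trans ?_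
    refine (lintegral_mono hle).trans ?_
    exact lintegral_mono_set Ioc_subset_Ioi_self
  have hlim : Filter.Tendsto (fun R => ENNReal.ofReal (h R) + ∫⁻ t in Ioi r, H t) Filter.atTop
      (nhds (0 + ∫⁻ t in Ioi r, H t)) := by
    refine Filter.Tendsto.add ?_ tendsto_const_nhds
    have h1 : Filter.Tendsto (fun R : ℝ => R • (o : Spc n)) Filter.atTop
        (Filter.cocompact _) := by
      rw [← Metric.cobounded_eq_cocompact, ← tendsto_norm_atTop_iff_cobounded]
      simp only [norm_smul, norm_eq_of_mem_sphere, mul_one]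
      exact tendsto_norm_atTop_atTop
    have h2 := (f.tendsto_cocompact.comp h1).norm.pow 2
    have h3 := ENNReal.tendsto_ofReal h2
    simpa only [Function.comp_def, norm_zero, ne_eq, OfNat.ofNat_ne_zero, not_false_eq_true,
      zero_pow, ENNReal.ofReal_zero] using h3
  have hfin : ENNReal.ofReal (h r) ≤ ∫⁻ t in Ioi r, H t := by
    have := ge_of_tendsto hlim ((Filter.eventually_ge_atTop r).mono hH')
    simpa using this
  have e3 : ‖f (r • (o : Spc n))‖ₑ ^ 2 = ENNReal.ofReal (h r) := by
    rw [hh, ← ofReal_norm, ENNReal.ofReal_pow (by positivity)]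
  rw [e3]
  calc _ ≤ ENNReal.ofReal (r ^ (n - 1)) * ∫⁻ t in Ioi r, H t := by gcongr
    _ = ∫⁻ t in Ioi r, ENNReal.ofReal (r ^ (n - 1)) * H t := by
        rw [lintegral_const_mul' _ _ (by simp)]
    _ ≤ ∫⁻ t in Ioi r, ENNReal.ofReal (t ^ (n - 1)) * H t := by
        refine setLIntegral_mono' measurableSet_Ioi fun t ht => ?_
        have : r ≤ t := le_of_lt ht
        gcongr
    _ ≤ _ := lintegral_mono_set (Ioi_subset_Ioi hr.le)

/-- The trace inequality, uniform in `r`: integrate `trace_pointwise` over the sphere and apply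
Cauchy–Schwarz on `ℝⁿ`. -/
lemma radN_trace {n : ℕ} (hn : 2 ≤ n) (f : 𝓢(Spc n, ℂ)) {r : ℝ} (hr : 0 < r) :
    radN f r ^ 2 ≤ 2 * eLpNorm f 2 volume *
      ∑ j, eLpNorm (partialS j f) 2 volume := by
  have hcf := f.continuous
  have hcd : ∀ j : Fin n, Continuous (partialS j f) :=
    fun j => SchwartzMap.continuous _
  rw [radN_sq hn f hr]
  refine (lintegral_mono fun o => trace_pointwise f o hr).trans ?_
  rw [← lintegral_polar (f := fun x => 2 * ‖f x‖ₑ *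
          ∑ j, ‖partialS j f x‖ₑ) hn (by fun_prop)]
  simp_rw [Finset.mul_sum]
  rw [lintegral_finsetSum _ (fun j _ => by fun_prop)]
  refine Finset.sum_le_sum fun j _ => ?_
  simp_rw [mul_assoc]
  rw [lintegral_const_mul _ (by fun_prop)]
  gcongr
  have := ENNReal.lintegral_mul_le_Lp_mul_Lq (volume : Measure (Spc n))
    Real.HolderConjugate.two_two (f := fun x => ‖f x‖ₑ)
    (g := fun x => ‖partialS j f x‖ₑ) (by fun_prop) (by fun_prop)
  simpa [eLpNorm_eq_lintegral_rpow_enorm_toReal] using this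

/-! ### Frequency-localized bounds -/

lemma plancherelS {n : ℕ} (f : 𝓢(Spc n, ℂ)) :
    eLpNorm (𝓕 f : 𝓢(Spc n, ℂ)) 2 volume = eLpNorm f 2 volume := by
  have h := SchwartzMap.norm_fourier_toL2_eq f
  rw [SchwartzMap.norm_toLp, SchwartzMap.norm_toLp] at h
  exact (ENNReal.toReal_eq_toReal_iff' (SchwartzMap.eLpNorm_lt_top _ _ _).ne
    (SchwartzMap.eLpNorm_lt_top _ _ _).ne).1 h

/-- An `L²` Bernstein inequality: if the Fourier transform of `f` lives in `|ξ| ≤ B`, a derivative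
costs a factor `2πB`. -/
lemma eLpNorm_partialS_le {n : ℕ} (f : 𝓢(Spc n, ℂ)) {B : ℝ}
    (hf : ∀ ξ, B < ‖ξ‖ → (𝓕 f : 𝓢(Spc n, ℂ)) ξ = 0) (j : Fin n) :
    eLpNorm (partialS j f) 2 volume ≤
      ENNReal.ofReal (2 * π * B) * eLpNorm (𝓕 f : 𝓢(Spc n, ℂ)) 2 volume := by
  rw [← plancherelS, partialS, SchwartzMap.fourier_lineDerivOp_eq]
  refine eLpNorm_le_mul_eLpNorm_of_ae_le_mul (Filter.Eventually.of_forall fun ξ => ?_) 2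
  have ht : (fun x : Spc n => inner ℝ x (EuclideanSpace.single j (1 : ℝ))).HasTemperateGrowth := by
    fun_prop
  rw [smul_apply, SchwartzMap.smulLeftCLM_apply_apply ht]
  by_cases hξ : B < ‖ξ‖
  · simp [hf ξ hξ]
  · push Not at hξ
    have h1 : ‖(inner ℝ ξ (EuclideanSpace.single j (1 : ℝ)) : ℝ)‖ ≤ B :=
      (norm_inner_le_norm _ _).trans (by simpa using hξ)
    rw [norm_smul, norm_smul, ← mul_assoc]
    gcongr
    have h2 : ‖(2 * π * Complex.I : ℂ)‖ = 2 * π := by simp [abs_of_pos Real.pi_pos]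
    rw [h2]

/-- The constant `√(4πn)` of the trace inequality for band-limited functions. -/
noncomputable def bandC (n : ℕ) : ℝ := Real.sqrt (4 * π * n)

/-- For `f` with frequencies in `|ξ| ≤ B`, the trace inequality gains half a derivative:
`radN f r ≲ B^{1/2} ‖f‖₂`. -/
lemma radN_band {n : ℕ} (hn : 2 ≤ n) (f : 𝓢(Spc n, ℂ)) {B : ℝ} (hB : 0 ≤ B)
    (hf : ∀ ξ, B < ‖ξ‖ → (𝓕 f : 𝓢(Spc n, ℂ)) ξ = 0) {r : ℝ} (hr : 0 < r) :
    radN f r ≤ ENNReal.ofReal (bandC n * Real.sqrt B) *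
      eLpNorm (𝓕 f : 𝓢(Spc n, ℂ)) 2 volume := by
  rw [← ENNReal.pow_le_pow_left_iff (n := 2) (by norm_num)]
  refine (radN_trace hn f hr).trans ?_
  rw [← plancherelS]
  refine (mul_le_mul_right (Finset.sum_le_sum fun j _ => eLpNorm_partialS_le f hf j) _).trans ?_
  rw [mul_pow, ← ENNReal.ofReal_pow (by unfold bandC; positivity), mul_pow, bandC,
    Real.sq_sqrt (by positivity), Real.sq_sqrt hB]
  simp only [Finset.sum_const, Finset.card_univ, Fintype.card_fin, nsmul_eq_mul]
  rw [show 4 * π * n * B = 2 * (n * (2 * π * B)) by ring,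
    ENNReal.ofReal_mul (p := (2 : ℝ)) (q := (n : ℝ) * (2 * π * B)) (by norm_num),
    ENNReal.ofReal_mul (p := (n : ℝ)) (by positivity), ENNReal.ofReal_ofNat,
    ENNReal.ofReal_natCast]
  apply le_of_eq
  ring

/-- A smooth cutoff equal to `1` on `|ξ| ≤ A` and to `0` on `|ξ| ≥ 2A`. The hypothesis `0 < A` is
placed inside the existential so that `choose` yields a family indexed by all of `ℝ`. -/
lemma exists_cutoff (n : ℕ) (A : ℝ) : ∃ χ : Spc n → ℝ, 0 < A →
    χ.HasTemperateGrowth ∧ (∀ ξ, 0 ≤ χ ξ ∧ χ ξ ≤ 1) ∧ (∀ ξ, ‖ξ‖ ≤ A → χ ξ = 1) ∧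
      (∀ ξ, 2 * A ≤ ‖ξ‖ → χ ξ = 0) := by
  by_cases hA : 0 < A
  · let b : ContDiffBump (0 : Spc n) := ⟨A, 2 * A, hA, by linarith⟩
    refine ⟨b, fun _ => ⟨?_, fun ξ => ⟨b.nonneg, b.le_one⟩, fun ξ hξ => ?_, fun ξ hξ => ?_⟩⟩
    · exact (b.hasCompactSupport.toSchwartzMap b.contDiff).hasTemperateGrowth
    · exact b.one_of_mem_closedBall (by simpa using hξ)
    · exact b.zero_of_le_dist (by simpa using hξ)
  · exact ⟨0, fun h => absurd h hA⟩

lemma fourier_mult {n : ℕ} {χ : Spc n → ℝ} (hχ : χ.HasTemperateGrowth) (V : 𝓢(Spc n, ℂ))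
    (ξ : Spc n) :
    (𝓕 (SchwartzMap.fourierMultiplierCLM ℂ χ V) : 𝓢(Spc n, ℂ)) ξ =
      χ ξ • (𝓕 V : 𝓢(Spc n, ℂ)) ξ := by
  rw [SchwartzMap.fourierMultiplierCLM_apply, FourierTransform.fourier_fourierInv_eq,
    SchwartzMap.smulLeftCLM_apply_apply hχ]

lemma fourier_sub_apply {n : ℕ} (f g : 𝓢(Spc n, ℂ)) (ξ : Spc n) :
    (𝓕 (f - g) : 𝓢(Spc n, ℂ)) ξ = (𝓕 f : 𝓢(Spc n, ℂ)) ξ - (𝓕 g : 𝓢(Spc n, ℂ)) ξ := by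
  exact congrArg (fun h : 𝓢(Spc n, ℂ) => h ξ)
    (map_sub (FourierTransform.fourierCLM ℂ 𝓢(Spc n, ℂ)) f g)

lemma radN_le_sub_add {n : ℕ} (f g : 𝓢(Spc n, ℂ)) (r : ℝ) :
    radN f r ≤ radN (f - g : 𝓢(Spc n, ℂ)) r + radN g r := by
  have := radN_add_le (f - g : 𝓢(Spc n, ℂ)).continuous g.continuous r
  convert this using 2
  ext x; simp

/-- The constant of the low-frequency bound: the bound for one dyadic block times the sum of the
geometric series of ratio `2^{-(1/2-s)}`. -/
noncomputable def lowC (n : ℕ) (s : ℝ) : ℝ :=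
  bandC n * Real.sqrt 2 * 2 ^ s * (1 - 2 ^ (-(1 / 2 - s)) : ℝ)⁻¹

/-- A splitting `V = L + (V - L)` at frequency `A`: the low part `L` is bounded in `radN` uniformly
in `r` by `A^{1/2-s} ‖|D|^s V‖₂`, and the high part has Fourier transform dominated by that of `V`
on `|ξ| ≥ A`. The low part is summed over dyadic blocks; the sum converges at low frequency because
`s < 1/2`. -/
lemma exists_low {n : ℕ} (hn : 2 ≤ n) {s : ℝ} (hs0 : 0 < s) (hs : s < 1 / 2)
    (V : 𝓢(Spc n, ℂ)) {A : ℝ} (hA : 0 < A) :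
    ∃ L : 𝓢(Spc n, ℂ),
      (∀ r, 0 < r → radN L r ≤ ENNReal.ofReal (lowC n s * A ^ (1 / 2 - s)) *
        eLpNorm (fun ξ => ‖ξ‖ ^ s * ‖(𝓕 V : 𝓢(Spc n, ℂ)) ξ‖) 2 volume) ∧
      (∀ ξ, ‖(𝓕 (V - L) : 𝓢(Spc n, ℂ)) ξ‖ₑ ≤
        {ξ : Spc n | A ≤ ‖ξ‖}.indicator (fun ξ => ‖(𝓕 V : 𝓢(Spc n, ℂ)) ξ‖ₑ) ξ) := by
  choose χ hχ using exists_cutoff n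
  set P : ℝ → 𝓢(Spc n, ℂ) := fun a => SchwartzMap.fourierMultiplierCLM ℂ (χ a) V with hP
  have hPF : ∀ a, 0 < a → ∀ ξ, (𝓕 (P a) : 𝓢(Spc n, ℂ)) ξ = χ a ξ • (𝓕 V : 𝓢(Spc n, ℂ)) ξ :=
    fun a ha ξ => fourier_mult (hχ a ha).1 V ξ
  refine ⟨P A, ?_, fun ξ => ?_⟩
  swap
  · obtain ⟨-, h01, h1, -⟩ := hχ A hA
    rw [fourier_sub_apply, hPF A hA]
    by_cases hξ : A ≤ ‖ξ‖
    · rw [Set.indicator_of_mem (by exact hξ), ← one_smul ℝ ((𝓕 V : 𝓢(Spc n, ℂ)) ξ), smul_smul,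
        ← sub_smul, mul_one, one_smul, enorm_smul]
      refine mul_le_of_le_one_left (by positivity) ?_
      rw [← ofReal_norm, Real.norm_eq_abs, abs_of_nonneg (by linarith [h01 ξ])]
      simpa using (h01 ξ).1
    · rw [h1 ξ (le_of_not_ge hξ)]
      simp
  intro r hr
  set N := eLpNorm (fun ξ => ‖ξ‖ ^ s * ‖(𝓕 V : 𝓢(Spc n, ℂ)) ξ‖) 2 volume with hN
  set σ : ℝ := 1 / 2 - s with hσ
  have hσ0 : 0 < σ := by linarith
  set q : ℝ := 2 ^ (-σ) with hq
  have hq0 : 0 < q := by positivity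
  have hq1 : q < 1 := Real.rpow_lt_one_of_one_lt_of_neg (by norm_num) (by linarith)
  set k : ℝ := bandC n * Real.sqrt 2 * 2 ^ s with hk
  have hk0 : 0 ≤ k := by unfold k bandC; positivity
  -- `P a - P (a / 2)` lives in `a / 2 ≤ |ξ| ≤ 2 a`, where `|ξ|^s` is comparable to `a^s`.
  have hblock : ∀ a, 0 < a → radN (P a - P (a / 2) : 𝓢(Spc n, ℂ)) r ≤
      ENNReal.ofReal (k * a ^ σ) * N := by
    intro a ha
    obtain ⟨-, h01, h1, h0⟩ := hχ a ha
    obtain ⟨-, h01', h1', h0'⟩ := hχ (a / 2) (by positivity)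
    have hF : ∀ ξ, (𝓕 (P a - P (a / 2)) : 𝓢(Spc n, ℂ)) ξ =
        (χ a ξ - χ (a / 2) ξ) • (𝓕 V : 𝓢(Spc n, ℂ)) ξ := by
      intro ξ
      rw [fourier_sub_apply, hPF a ha, hPF (a / 2) (by positivity), sub_smul]
    refine (radN_band hn _ (B := 2 * a) (by positivity) (fun ξ hξ => ?_) hr).trans ?_
    · rw [hF, h0 ξ hξ.le, h0' ξ (by linarith)]; simp
    have hle : eLpNorm (𝓕 (P a - P (a / 2)) : 𝓢(Spc n, ℂ)) 2 volume ≤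
        ENNReal.ofReal ((a / 2) ^ (-s)) * N := by
      refine eLpNorm_le_mul_eLpNorm_of_ae_le_mul (Filter.Eventually.of_forall fun ξ => ?_) 2
      rw [hF, norm_smul, Real.norm_eq_abs (‖ξ‖ ^ s * _), abs_of_nonneg (by positivity), ← mul_assoc]
      gcongr
      by_cases hξ : ‖ξ‖ ≤ a / 2
      · rw [h1 ξ (by linarith), h1' ξ hξ]; simp; positivity
      · push Not at hξ
        have e1 : |χ a ξ - χ (a / 2) ξ| ≤ 1 := by
          rw [abs_le]; constructor <;> linarith [h01 ξ, h01' ξ]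
        refine e1.trans ?_
        rw [Real.rpow_neg (by positivity), inv_mul_eq_div, one_le_div (by positivity)]
        exact Real.rpow_le_rpow (by positivity) hξ.le hs0.le
    refine (mul_le_mul_right hle _).trans ?_
    rw [← mul_assoc, ← ENNReal.ofReal_mul (by unfold bandC; positivity)]
    gcongr ENNReal.ofReal ?_ * _
    apply le_of_eq
    rw [hk, hσ, Real.rpow_sub ha, Real.div_rpow ha.le (by norm_num), Real.rpow_neg ha.le,
      Real.rpow_neg (by norm_num), Real.sqrt_mul (by norm_num), ← Real.sqrt_eq_rpow]
    have : (0 : ℝ) < a ^ s := by positivity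
    have : (0 : ℝ) < 2 ^ s := by positivity
    field_simp
  have hpow : ∀ m : ℕ, (A / 2 ^ m) ^ σ = A ^ σ * q ^ m := by
    intro m
    rw [Real.div_rpow hA.le (by positivity), hq, Real.rpow_neg (by norm_num), inv_pow,
      ← Real.rpow_natCast, ← Real.rpow_natCast, ← Real.rpow_mul (by norm_num),
      ← Real.rpow_mul (by norm_num), mul_comm σ]
    rfl
  -- Telescoping over the scales `A, A / 2, …, A / 2 ^ m`, with remainder `P (A / 2 ^ m)`.
  have hind : ∀ m : ℕ, radN (P A) r ≤
      ENNReal.ofReal (k * A ^ σ * ∑ i ∈ Finset.range m, q ^ i) * N + radN (P (A / 2 ^ m)) r := by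
    intro m
    induction m with
    | zero => simp
    | succ m ih =>
      refine ih.trans ?_
      have h1 := radN_le_sub_add (P (A / 2 ^ m)) (P (A / 2 ^ m / 2)) r
      have h2 := h1.trans (add_le_add_left (hblock (A / 2 ^ m) (by positivity)) _)
      refine (add_le_add_right h2 _).trans ?_
      rw [hpow, ← add_assoc, ← add_mul, ← ENNReal.ofReal_add
        (mul_nonneg (by positivity) (Finset.sum_nonneg fun i _ => by positivity)) (by positivity),
        Finset.sum_range_succ, pow_succ, div_div]
      apply le_of_eq
      congr 3
      ring
  -- The remainder is controlled by `(A / 2 ^ m)^{1/2} ‖V‖₂`, which tends to `0`.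
  have hbound : ∀ m : ℕ, radN (P A) r ≤ ENNReal.ofReal (lowC n s * A ^ σ) * N +
      ENNReal.ofReal (bandC n * Real.sqrt (2 * (A / 2 ^ m))) *
        eLpNorm (𝓕 V : 𝓢(Spc n, ℂ)) 2 volume := by
    intro m
    refine (hind m).trans (add_le_add ?_ ?_)
    · gcongr ENNReal.ofReal ?_ * _
      have h1 : ∑ i ∈ Finset.range m, q ^ i ≤ (1 - q)⁻¹ := by
        rw [← tsum_geometric_of_lt_one hq0.le hq1]
        exact (summable_geometric_of_lt_one hq0.le hq1).sum_le_tsum _ (fun i _ => by positivity)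
      calc k * A ^ σ * ∑ i ∈ Finset.range m, q ^ i ≤ k * A ^ σ * (1 - q)⁻¹ := by gcongr
        _ = lowC n s * A ^ σ := by rw [lowC]; ring
    · have hpos : 0 < A / 2 ^ m := by positivity
      obtain ⟨-, h01, h1, h0⟩ := hχ (A / 2 ^ m) hpos
      refine (radN_band hn _ (B := 2 * (A / 2 ^ m)) (by positivity) (fun ξ hξ => ?_) hr).trans ?_
      · rw [hPF _ hpos, h0 ξ hξ.le]; simp
      gcongr
      refine eLpNorm_mono fun ξ => ?_
      rw [hPF _ hpos, norm_smul, Real.norm_eq_abs, abs_of_nonneg (h01 ξ).1]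
      exact mul_le_of_le_one_left (by positivity) (h01 ξ).2
  have hlim : Filter.Tendsto (fun m : ℕ => ENNReal.ofReal (lowC n s * A ^ σ) * N +
      ENNReal.ofReal (bandC n * Real.sqrt (2 * (A / 2 ^ m))) *
        eLpNorm (𝓕 V : 𝓢(Spc n, ℂ)) 2 volume) Filter.atTop
      (nhds (ENNReal.ofReal (lowC n s * A ^ σ) * N + 0)) := by
    refine Filter.Tendsto.add tendsto_const_nhds ?_
    have h1 : Filter.Tendsto (fun m : ℕ => A / 2 ^ m) Filter.atTop (nhds 0) :=
      tendsto_const_nhds.div_atTop (tendsto_pow_atTop_atTop_of_one_lt (by norm_num))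
    have h2 : Filter.Tendsto (fun m : ℕ => bandC n * Real.sqrt (2 * (A / 2 ^ m))) Filter.atTop
        (nhds (bandC n * Real.sqrt (2 * 0))) :=
      ((Real.continuous_sqrt.tendsto _).comp (h1.const_mul 2)).const_mul _
    have h3 := ENNReal.Tendsto.mul_const (ENNReal.tendsto_ofReal h2)
      (Or.inr (SchwartzMap.eLpNorm_lt_top (𝓕 V : 𝓢(Spc n, ℂ)) 2 volume).ne)
    simpa using h3
  simpa using ge_of_tendsto' hlim hbound

/-! ### The level-set argument -/

lemma radN_ne_top {n : ℕ} (V : 𝓢(Spc n, ℂ)) (r : ℝ) : radN V r ≠ ⊤ := by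
  unfold radN
  refine ENNReal.mul_ne_top (by simp) ?_
  obtain ⟨C, hC⟩ := V.decay 0 0
  have hc := V.continuous
  refine (MemLp.of_bound (p := 2) (C := C) (Continuous.aestronglyMeasurable (by fun_prop))
    (Filter.Eventually.of_forall fun o => ?_)).eLpNorm_ne_top
  simpa using hC.2 (r • (o : Spc n))

lemma measurable_radN {n : ℕ} {f : Spc n → ℂ} (hf : Continuous f) : Measurable (radN f) := by
  unfold radN
  simp_rw [eLpNorm_eq_lintegral_rpow_enorm_toReal (p := 2) (by norm_num) (by norm_num)]
  refine Measurable.mul (by fun_prop) (Measurable.pow_const ?_ _)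
  have hfm := hf.measurable
  apply Measurable.lintegral_prod_right'
    (f := fun z : ℝ × sphere (0 : Spc n) 1 => ‖f (z.1 • (z.2 : Spc n))‖ₑ ^ (2 : ℝ≥0∞).toReal)
  fun_prop

lemma lintegral_rpow_Ioc {a M : ℝ} (ha : -1 < a) (hM : 0 ≤ M) :
    ∫⁻ t in Ioc 0 M, ENNReal.ofReal (t ^ a) = ENNReal.ofReal (M ^ (a + 1) / (a + 1)) := by
  rw [← ofReal_integral_eq_lintegral_ofReal, ← intervalIntegral.integral_of_le hM,
    integral_rpow (Or.inl ha), Real.zero_rpow (by linarith), sub_zero]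
  · exact (intervalIntegrable_iff_integrableOn_Ioc_of_le hM).1
      (intervalIntegral.intervalIntegrable_rpow' ha)
  · filter_upwards [ae_restrict_mem measurableSet_Ioc] with t ht
    exact Real.rpow_nonneg ht.1.le _

lemma lowC_pos {n : ℕ} (hn : 2 ≤ n) {s : ℝ} (hs : s < 1 / 2) : 0 < lowC n s := by
  have hq1 : (2 : ℝ) ^ (-(1 / 2 - s)) < 1 :=
    Real.rpow_lt_one_of_one_lt_of_neg (by norm_num) (by linarith)
  have : 0 < (1 - 2 ^ (-(1 / 2 - s)) : ℝ)⁻¹ := inv_pos.2 (by linarith)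
  have : 0 < bandC n := by
    unfold bandC
    have : (0 : ℝ) < n := by exact_mod_cast (by omega : 0 < n)
    positivity
  unfold lowC
  positivity

/-- Bound for the level set `{radN V > t}`: at the frequency threshold where the low part is at most
`t / 2`, the high part exceeds `t / 2` on the level set, and Chebyshev with Plancherel bounds its
measure. The condition `t ≤ 2 K N |ξ|^{1/p}` describes the frequencies above the threshold. -/
lemma meas_level {n : ℕ} (hn : 2 ≤ n) {p : ℝ} (hp : 2 < p) (V : 𝓢(Spc n, ℂ)) {N : ℝ}
    (hN : 0 < N)
    (hVN : eLpNorm (fun ξ => ‖ξ‖ ^ (1 / 2 - 1 / p) * ‖(𝓕 V : 𝓢(Spc n, ℂ)) ξ‖) 2 volume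
      ≤ ENNReal.ofReal N) {t : ℝ} (ht : 0 < t) :
    volume.restrict (Ioi (0 : ℝ)) {r | t < (radN V r).toReal} ≤
      (∫⁻ ξ, {ξ : Spc n | t ≤ 2 * lowC n (1 / 2 - 1 / p) * N * ‖ξ‖ ^ (1 / p)}.indicator
        (fun ξ => ‖(𝓕 V : 𝓢(Spc n, ℂ)) ξ‖ₑ ^ 2) ξ) / ENNReal.ofReal (t / 2) ^ 2 := by
  have hp0 : 0 < p := by linarith
  have hs0 : 0 < 1 / 2 - 1 / p := by
    have : 1 / p < 1 / 2 := one_div_lt_one_div_of_lt (by norm_num) hp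
    linarith
  have hs1 : 1 / 2 - 1 / p < 1 / 2 := by
    have : 0 < 1 / p := by positivity
    linarith
  set K := lowC n (1 / 2 - 1 / p) with hK
  have hK0 : 0 < K := lowC_pos hn hs1
  -- The threshold solves `K A^{1/p} N = t / 2`, so the low part is at most `t / 2`.
  set A : ℝ := (t / (2 * K * N)) ^ p with hA
  have hA0 : 0 < A := by positivity
  have hAp : A ^ (1 / p) = t / (2 * K * N) := by
    rw [hA, ← Real.rpow_mul (by positivity), mul_one_div_cancel hp0.ne', Real.rpow_one]
  obtain ⟨L, hL1, hL2⟩ := exists_low hn hs0 hs1 V hA0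
  have hL3 : ∀ r, 0 < r → radN L r ≤ ENNReal.ofReal (t / 2) := by
    intro r hr
    refine (hL1 r hr).trans ((mul_le_mul_right hVN _).trans ?_)
    rw [← ENNReal.ofReal_mul (by positivity), ← hK,
      show 1 / 2 - (1 / 2 - 1 / p) = 1 / p by ring, hAp]
    apply le_of_eq
    congr 1
    field_simp
  have hsub : volume.restrict (Ioi (0 : ℝ)) {r | t < (radN V r).toReal} ≤
      volume.restrict (Ioi (0 : ℝ))
        {r | ENNReal.ofReal (t / 2) ^ 2 ≤ radN (V - L : 𝓢(Spc n, ℂ)) r ^ 2} := by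
    refine measure_mono_ae ?_
    filter_upwards [ae_restrict_mem measurableSet_Ioi] with r (hr : 0 < r) (h : t < _)
    change ENNReal.ofReal (t / 2) ^ 2 ≤ radN (V - L : 𝓢(Spc n, ℂ)) r ^ 2
    gcongr
    by_contra hlt
    push Not at hlt
    have h1 := (radN_le_sub_add V L r).trans (add_le_add hlt.le (hL3 r hr))
    rw [← ENNReal.ofReal_add (by positivity) (by positivity), add_halves] at h1
    have h2 := ENNReal.toReal_le_of_le_ofReal ht.le h1
    linarith
  refine hsub.trans ((meas_ge_le_lintegral_div
    ((measurable_radN (V - L : 𝓢(Spc n, ℂ)).continuous).pow_const 2).aemeasurable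
    (by simpa using ht) (by simp)).trans ?_)
  gcongr
  rw [lintegral_radN_sq hn (V - L : 𝓢(Spc n, ℂ)).continuous, ← plancherelS, eLpNorm_two_sq]
  refine lintegral_mono fun ξ => ?_
  by_cases hξ : A ≤ ‖ξ‖
  · have h1 : t ≤ 2 * K * N * ‖ξ‖ ^ (1 / p) := by
      have := Real.rpow_le_rpow hA0.le hξ (by positivity : 0 ≤ 1 / p)
      rwa [hAp, div_le_iff₀' (by positivity)] at this
    rw [Set.indicator_of_mem (by exact h1)]
    have := hL2 ξ
    rw [Set.indicator_of_mem (by exact hξ)] at this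
    gcongr
  · have := hL2 ξ
    rw [Set.indicator_of_notMem (by exact hξ)] at this
    rw [le_zero_iff.1 this]
    simp

/-- The `L^p(dr)` bound for `radN V`: insert `meas_level` into the layer-cake formula and exchange
the integrals in `t` and `ξ`. The `t`-integral of `t^{p-3}` up to `2 K N |ξ|^{1/p}` produces
`|ξ|^{(p-2)/p}`, the square of the symbol `|ξ|^{1/2-1/p}`. -/
lemma lintegral_radN_rpow {n : ℕ} (hn : 2 ≤ n) {p : ℝ} (hp : 2 < p) (V : 𝓢(Spc n, ℂ)) {N : ℝ}
    (hN : 0 < N)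
    (hVN : eLpNorm (fun ξ => ‖ξ‖ ^ (1 / 2 - 1 / p) * ‖(𝓕 V : 𝓢(Spc n, ℂ)) ξ‖) 2 volume
      ≤ ENNReal.ofReal N) :
    ∫⁻ r in Ioi (0 : ℝ), radN V r ^ p ≤
      ENNReal.ofReal (4 * p / (p - 2) * (2 * lowC n (1 / 2 - 1 / p)) ^ (p - 2) * N ^ p) := by
  have hp0 : 0 < p := by linarith
  have hp2 : 0 < p - 2 := by linarith
  have hs1 : 1 / 2 - 1 / p < 1 / 2 := by
    have : 0 < 1 / p := by positivity
    linarith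
  have hlev := fun t ht => meas_level hn hp V hN hVN (t := t) ht
  set K := lowC n (1 / 2 - 1 / p) with hK
  have hK0 : 0 < K := lowC_pos hn hs1
  set G : Spc n → ℝ≥0∞ := fun ξ => ‖(𝓕 V : 𝓢(Spc n, ℂ)) ξ‖ₑ ^ 2 with hG
  have hGm : Measurable G := by
    have := (𝓕 V : 𝓢(Spc n, ℂ)).continuous
    fun_prop
  set M : Spc n → ℝ := fun ξ => 2 * K * N * ‖ξ‖ ^ (1 / p) with hM
  have hM0 : ∀ ξ, 0 ≤ M ξ := fun ξ => by positivity
  have hMm : Measurable M := by fun_prop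
  have h1 : ∫⁻ r in Ioi (0 : ℝ), radN V r ^ p =
      ∫⁻ r in Ioi (0 : ℝ), ENNReal.ofReal ((radN V r).toReal ^ p) := by
    refine lintegral_congr fun r => ?_
    rw [← ENNReal.ofReal_rpow_of_nonneg (by positivity) hp0.le,
      ENNReal.ofReal_toReal (radN_ne_top V r)]
  rw [h1, lintegral_rpow_eq_lintegral_meas_lt_mul _ (Filter.Eventually.of_forall fun r => by
    simp) (measurable_radN V.continuous).ennreal_toReal.aemeasurable hp0]
  have h2 : ∫⁻ t in Ioi (0 : ℝ), volume.restrict (Ioi (0 : ℝ)) {r | t < (radN V r).toReal} *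
        ENNReal.ofReal (t ^ (p - 1)) ≤
      ∫⁻ t in Ioi (0 : ℝ), ∫⁻ ξ, ENNReal.ofReal (4 * t ^ (p - 3)) *
        {z : ℝ × Spc n | z.1 ≤ M z.2}.indicator (fun z => G z.2) (t, ξ) := by
    refine setLIntegral_mono' measurableSet_Ioi fun t (ht : 0 < t) => ?_
    rw [lintegral_const_mul' _ _ ENNReal.ofReal_ne_top]
    refine (mul_le_mul_left (hlev t ht) _).trans (le_of_eq ?_)
    rw [div_eq_mul_inv, mul_assoc, mul_comm]
    congr 1
    rw [← ENNReal.ofReal_pow (by positivity), ← ENNReal.ofReal_inv_of_pos (by positivity),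
      ← ENNReal.ofReal_mul (by positivity)]
    congr 1
    rw [show p - 1 = (p - 3) + 2 by ring, Real.rpow_add ht, Real.rpow_two]
    field_simp
    norm_num
  have hmeas : MeasurableSet {z : ℝ × Spc n | z.1 ≤ M z.2} :=
    measurableSet_le measurable_fst (hMm.comp measurable_snd)
  have h3 : ∫⁻ t in Ioi (0 : ℝ), (∫⁻ ξ, ENNReal.ofReal (4 * t ^ (p - 3)) *
        {z : ℝ × Spc n | z.1 ≤ M z.2}.indicator (fun z => G z.2) (t, ξ)) =
      ∫⁻ ξ, ENNReal.ofReal (4 * (M ξ ^ (p - 2) / (p - 2))) * G ξ := by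
    rw [lintegral_lintegral_swap]
    · refine lintegral_congr fun ξ => ?_
      have e1 : ∀ t : ℝ, ENNReal.ofReal (4 * t ^ (p - 3)) *
          {z : ℝ × Spc n | z.1 ≤ M z.2}.indicator (fun z => G z.2) (t, ξ) =
          (Iic (M ξ)).indicator (fun t => 4 * ENNReal.ofReal (t ^ (p - 3)) * G ξ) t := by
        intro t
        by_cases h : t ≤ M ξ
        · rw [Set.indicator_of_mem (by exact h), Set.indicator_of_mem (by exact h),
            ENNReal.ofReal_mul (by norm_num)]
          simp
        · rw [Set.indicator_of_notMem (by exact h), Set.indicator_of_notMem (by exact h), mul_zero]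
      simp_rw [e1]
      rw [lintegral_indicator measurableSet_Iic, Measure.restrict_restrict measurableSet_Iic,
        Set.inter_comm, Set.Ioi_inter_Iic, lintegral_mul_const _ (by fun_prop),
        lintegral_const_mul _ (by fun_prop), lintegral_rpow_Ioc (by linarith) (hM0 ξ),
        show p - 3 + 1 = p - 2 by ring, ENNReal.ofReal_mul (by norm_num)]
      simp
    · refine Measurable.aemeasurable ?_
      simp only [Function.uncurry_def]
      exact Measurable.mul (by fun_prop) ((hGm.comp measurable_snd).indicator hmeas)
  have h4 : ∀ ξ, ENNReal.ofReal (4 * (M ξ ^ (p - 2) / (p - 2))) * G ξ =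
      ENNReal.ofReal (4 / (p - 2) * (2 * K * N) ^ (p - 2)) *
        ‖((‖ξ‖ ^ (1 / 2 - 1 / p) * ‖(𝓕 V : 𝓢(Spc n, ℂ)) ξ‖ : ℝ) : ℂ)‖ₑ ^ 2 := by
    intro ξ
    simp only [hG, ← ofReal_norm]
    rw [← ENNReal.ofReal_pow (by positivity), ← ENNReal.ofReal_pow (by positivity),
      ← ENNReal.ofReal_mul (by positivity), ← ENNReal.ofReal_mul (by positivity)]
    congr 1
    rw [Complex.norm_real, Real.norm_eq_abs, sq_abs, mul_pow, hM]
    dsimp only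
    rw [Real.mul_rpow (by positivity) (by positivity), ← Real.rpow_mul (by positivity),
      ← Real.rpow_natCast (‖ξ‖ ^ (1 / 2 - 1 / p)), ← Real.rpow_mul (by positivity),
      show (1 / 2 - 1 / p) * ((2 : ℕ) : ℝ) = 1 / p * (p - 2) by push_cast; field_simp]
    ring
  have h5 : ∫⁻ ξ : Spc n, ‖((‖ξ‖ ^ (1 / 2 - 1 / p) * ‖(𝓕 V : 𝓢(Spc n, ℂ)) ξ‖ : ℝ) : ℂ)‖ₑ ^ 2
      ≤ ENNReal.ofReal N ^ 2 := by
    rw [← eLpNorm_two_sq]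
    gcongr
    refine le_trans (le_of_eq ?_) hVN
    exact eLpNorm_congr_norm_ae (Filter.Eventually.of_forall fun ξ => Complex.norm_real _)
  refine (mul_le_mul_right (h2.trans_eq h3) _).trans ?_
  simp_rw [h4]
  rw [lintegral_const_mul' _ _ ENNReal.ofReal_ne_top]
  refine (mul_le_mul_right (mul_le_mul_right h5 _) _).trans (le_of_eq ?_)
  rw [← ENNReal.ofReal_pow hN.le, ← ENNReal.ofReal_mul (by positivity),
    ← ENNReal.ofReal_mul hp0.le]
  congr 1
  rw [Real.mul_rpow (by positivity) hN.le]
  have hNp : N ^ p = N ^ (p - 2) * N ^ 2 := by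
    rw [← Real.rpow_two, ← Real.rpow_add hN]
    congr 1
    ring
  rw [hNp]
  ring

/-! ### The weighted inequality -/

/-- The weight `|x|^{(n-1)(1/2-1/p)}` and the polar density `r^{n-1}` combine to exactly the weight
`r^{(n-1)/2}` of `radN`. -/
lemma mixN_eq {n : ℕ} (hn : 2 ≤ n) {p : ℝ} (hp : 2 < p) (v : Spc n → ℝ) :
    mixN n p 2 (fun x => ‖x‖ ^ (((n : ℝ) - 1) * (1 / 2 - 1 / p)) * v x) =
      (∫⁻ r in Ioi (0 : ℝ), radN (fun x => (v x : ℂ)) r ^ p) ^ (1 / p) := by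
  have hp0 : 0 < p := by linarith
  unfold mixN
  congr 1
  refine setLIntegral_congr_fun measurableSet_Ioi fun r (hr : 0 < r) => ?_
  have h1 : sphN n 2 (fun x => ‖x‖ ^ (((n : ℝ) - 1) * (1 / 2 - 1 / p)) * v x) r =
      ENNReal.ofReal (r ^ (((n : ℝ) - 1) * (1 / 2 - 1 / p))) *
        eLpNorm (fun o : sphere (0 : Spc n) 1 => ((v (r • (o : Spc n)) : ℝ) : ℂ)) 2 (sphM n) := by
    have h2 : sphN n 2 (fun x => ‖x‖ ^ (((n : ℝ) - 1) * (1 / 2 - 1 / p)) * v x) r =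
        eLpNorm (fun o : sphere (0 : Spc n) 1 =>
          r ^ (((n : ℝ) - 1) * (1 / 2 - 1 / p)) • ((v (r • (o : Spc n)) : ℝ) : ℂ)) 2 (sphM n) := by
      rw [eLpNorm_eq_lintegral_rpow_enorm_toReal (by norm_num) (by norm_num), sphN]
      simp only [ENNReal.toReal_ofNat]
      congr 1
      refine lintegral_congr fun o => ?_
      congr 1
      rw [← enorm_eq_nnnorm, ← ofReal_norm, ← ofReal_norm]
      congr 1
      simp [norm_smul, abs_of_pos hr]
    rw [h2]
    have h3 := eLpNorm_const_smul (r ^ (((n : ℝ) - 1) * (1 / 2 - 1 / p)))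
      (fun o : sphere (0 : Spc n) 1 => ((v (r • (o : Spc n)) : ℝ) : ℂ)) 2 (sphM n)
    rw [← Real.enorm_of_nonneg (by positivity), ← h3]
    rfl
  simp only [h1, radN]
  rw [ENNReal.mul_rpow_of_nonneg _ _ hp0.le, ENNReal.mul_rpow_of_nonneg _ _ hp0.le,
    ENNReal.ofReal_rpow_of_nonneg (by positivity) hp0.le,
    ENNReal.ofReal_rpow_of_nonneg (by positivity) hp0.le, mul_right_comm,
    ← ENNReal.ofReal_mul (by positivity)]
  congr 2
  rw [← Real.rpow_natCast, Nat.cast_sub (by omega), ← Real.rpow_mul hr.le, ← Real.rpow_mul hr.le,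
    ← Real.rpow_add hr]
  congr 1
  push_cast
  field_simp
  ring

end aux

/-- The Li–Zhou weighted Sobolev-type inequality (Lemma 3.3). -/
theorem weighted_sobolev (n : ℕ) (hn : 2 ≤ n) (p : ℝ) (hp : 2 < p) :
    ∃ C > (0 : ℝ), ∀ v : Spc n → ℝ, ContDiff ℝ ∞ v → HasCompactSupport v →
      mixN n p 2 (fun x => ‖x‖ ^ (((n : ℝ) - 1) * (1/2 - 1/p)) * v x) ≤
        ENNReal.ofReal C * DsN (1/2 - 1/p) v := by
  have hp0 : 0 < p := by linarith
  have hp2 : 0 < p - 2 := by linarith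
  have hK0 : 0 < lowC n (1 / 2 - 1 / p) := lowC_pos hn (by
    have : 0 < 1 / p := by positivity
    linarith)
  set D : ℝ := 4 * p / (p - 2) * (2 * lowC n (1 / 2 - 1 / p)) ^ (p - 2) with hD
  have hD0 : 0 < D := by positivity
  refine ⟨D ^ (1 / p), by positivity, fun v hv hvc => ?_⟩
  let V : SchwartzMap (Spc n) ℂ :=
    HasCompactSupport.toSchwartzMap (f := fun x => (v x : ℂ)) (hvc.comp_left Complex.ofReal_zero)
      (Complex.ofRealCLM.contDiff.comp hv)
  have hV : DsN (1 / 2 - 1 / p) v =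
      eLpNorm (fun ξ => ‖ξ‖ ^ (1 / 2 - 1 / p) * ‖(𝓕 V : SchwartzMap (Spc n) ℂ) ξ‖) 2 volume := rfl
  rw [mixN_eq hn hp]
  have key : ∀ N : ℝ, 0 < N → DsN (1 / 2 - 1 / p) v ≤ ENNReal.ofReal N →
      (∫⁻ r in Set.Ioi (0 : ℝ), radN (fun x => (v x : ℂ)) r ^ p) ^ (1 / p) ≤
        ENNReal.ofReal (D ^ (1 / p)) * ENNReal.ofReal N := by
    intro N hN hVN
    have h := lintegral_radN_rpow hn hp V hN (hV ▸ hVN)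
    refine (ENNReal.rpow_le_rpow h (by positivity)).trans (le_of_eq ?_)
    rw [← hD, ENNReal.ofReal_rpow_of_nonneg (by positivity) (by positivity),
      Real.mul_rpow hD0.le (by positivity), ← Real.rpow_mul hN.le, mul_one_div_cancel hp0.ne',
      Real.rpow_one, ENNReal.ofReal_mul (by positivity)]
  rcases eq_or_ne (DsN (1 / 2 - 1 / p) v) ⊤ with htop | htop
  · rw [htop, ENNReal.mul_top (by simpa using Real.rpow_pos_of_pos hD0 _)]
    exact le_top
  -- `key` requires `N > 0`, so it is applied to `‖|D|^s v‖ + ε` with `ε → 0`.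
  have hlim : Filter.Tendsto (fun ε : ℝ => ENNReal.ofReal (D ^ (1 / p)) *
      ENNReal.ofReal ((DsN (1 / 2 - 1 / p) v).toReal + ε)) (nhdsWithin 0 (Set.Ioi 0))
      (nhds (ENNReal.ofReal (D ^ (1 / p)) *
        ENNReal.ofReal ((DsN (1 / 2 - 1 / p) v).toReal + 0))) := by
    refine ENNReal.Tendsto.const_mul ?_ (Or.inr (by simp))
    refine ENNReal.tendsto_ofReal (Filter.Tendsto.mono_left ?_ nhdsWithin_le_nhds)
    exact tendsto_const_nhds.add Filter.tendsto_id
  rw [add_zero, ENNReal.ofReal_toReal htop] at hlim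
  refine ge_of_tendsto hlim ?_
  filter_upwards [self_mem_nhdsWithin] with ε (hε : 0 < ε)
  refine key _ (by positivity) ?_
  rw [← ENNReal.ofReal_toReal htop, ENNReal.toReal_ofReal (by positivity)]
  exact ENNReal.ofReal_le_ofReal (by linarith)
end

section
/- Let s ∈ (1/2, 3/2) and define p by 2/p = 3/2 − s. Then there exists a constant C > 0 such that for every v ∈ C_c^∞(ℝ³) and every r > 0, r^{3/2−s} ‖v(rω)‖_{L^p(S², dS_ω)} ≤ C ‖ |D|^s v ‖_{L²(ℝ³)}. -/
/-!
The inequality is the Sobolev trace embedding of `Ḣ^s(ℝ³)` into `L^p(S²)` at the scaling-critical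
exponent. On the Fourier side the function is `invF h x = ∫ h ξ exp (2 π i x·ξ) dξ` with `h` its
Fourier transform; the norm on the right is the `L²` norm of `‖ξ‖ ^ s h`.

*An `L²` trace estimate with a gain at high frequency.* For the extension operator `sphExt g` of the
sphere, `∫ |sphExt g|² exp (-π |ξ|² / R²) dξ` equals a quadratic form in `g` with kernel
`R³ exp (-π R² |o - o'|²)`. Since the surface integral of this Gaussian is `O(R⁻²)`
(`gauss_sphere`), the Schur test bounds the form by `C R ‖g‖²` (`gauss_ext`). Superposing the
Gaussians over `R > A` gives a bound with the weight `‖ξ‖ ^ (-2t)` on `‖ξ‖ > A` for any `t > 1 / 2`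
(`ext_weighted`). By duality, a function with frequencies larger than `A` satisfies
`‖invF h‖²_{L²(S²)} ≤ C A ^ (1 - 2t) ∫ |h|² ‖ξ‖ ^ (2t)` (`trace_L2`).

*From `L²` to `L^p`.* The argument is a real interpolation by hand. Low frequencies `‖ξ‖ ≤ A`
contribute at most `C A ^ (3 / 2 - s)` in supremum norm (`low_freq`), by Cauchy–Schwarz. At height
`l` the cutoff `A` is chosen so that this contribution is at most `l / 2`; Chebyshev and `trace_L2`
with some `1 / 2 < t < s` then bound the measure of `{|invF h| > l}` (`level_set`). Integrating
`p l ^ (p - 1)` times this bound and exchanging the integrals in `l` and `ξ` turns the weight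
`‖ξ‖ ^ (2t)` into `‖ξ‖ ^ (2s)` (`normalized_bound`). Dilations reduce a general radius and a general
norm to this case (`scaled_bound`).
-/

open MeasureTheory Real ENNReal FourierTransform
open scoped ContDiff

/-! ### Polar coordinates and Gaussians on the sphere -/

instance : IsFiniteMeasure (sphM 3) := by unfold sphM; infer_instance

/-- Polar coordinates in ℝ³ for the surface measure `sphM 3`. -/
lemma polar_lintegral (F : Spc 3 → ℝ≥0∞) (hF : Measurable F) :
    ∫⁻ x, F x = ∫⁻ o, ∫⁻ r in Set.Ioi (0 : ℝ), ENNReal.ofReal (r ^ 2) * F (r • (o : Spc 3))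
      ∂volume ∂(sphM 3) := by
  have hmp := (volume : Measure (Spc 3)).measurePreserving_homeomorphUnitSphereProd
  have h0 : ∫⁻ x, F x = ∫⁻ x : ({(0 : Spc 3)}ᶜ : Set (Spc 3)), F x
      ∂((volume : Measure (Spc 3)).comap (↑)) := by
    rw [lintegral_subtype_comap (measurableSet_singleton _).compl F, restrict_compl_singleton]
  have h1 := hmp.lintegral_comp_emb (Homeomorph.measurableEmbedding _)
    (fun q => F ((q.2 : ℝ) • (q.1 : Spc 3)))
  have h2 : ∀ x : ({(0 : Spc 3)}ᶜ : Set (Spc 3)),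
      ((homeomorphUnitSphereProd (Spc 3) x).2 : ℝ) •
        ((homeomorphUnitSphereProd (Spc 3) x).1 : Spc 3) = x := by
    intro x
    have := (homeomorphUnitSphereProd (Spc 3)).symm_apply_apply x
    have h3 := congrArg Subtype.val this
    rwa [homeomorphUnitSphereProd_symm_apply_coe] at h3
  simp only [h2] at h1
  have hm : Measurable (fun q : Metric.sphere (0 : Spc 3) 1 × Set.Ioi (0 : ℝ) =>
      F ((q.2 : ℝ) • (q.1 : Spc 3))) := by fun_prop
  rw [h0, h1, lintegral_prod _ hm.aemeasurable]
  unfold sphM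
  refine lintegral_congr fun o => ?_
  have hd : Module.finrank ℝ (Spc 3) - 1 = 2 := by simp
  rw [hd, Measure.volumeIoiPow, lintegral_withDensity_eq_lintegral_mul]
  · rw [← lintegral_subtype_comap measurableSet_Ioi]
    rfl
  · fun_prop
  · fun_prop

/-- A Gaussian bump of width `1 / R` centred on the sphere has surface integral `O(R⁻²)`.
The sphere is thickened to the shell `1 < |x| < 1 + 1 / R`: there the bump `exp (-π R² |o - w|²)` is
dominated, up to a constant, by a wider Gaussian on ℝ³, whose integral is `O(R⁻³)`; dividing by
the thickness `1 / R` gives the claim. -/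
lemma gauss_sphere (R : ℝ) (hR : 0 < R) (w : Metric.sphere (0 : Spc 3) 1) :
    ∫⁻ o, ENNReal.ofReal (rexp (-(π * R ^ 2 * ‖(o : Spc 3) - w‖ ^ 2))) ∂(sphM 3) ≤
      ENNReal.ofReal (rexp π * 2 ^ (3 / 2 : ℝ) / R ^ 2) := by
  set b : ℝ := π * R ^ 2 / 2 with hb
  have hb0 : 0 < b := by positivity
  have hgauss : ∫ v : Spc 3, rexp (-b * ‖v‖ ^ 2) = 2 ^ (3 / 2 : ℝ) / R ^ 3 := by
    rw [GaussianFourier.integral_rexp_neg_mul_sq_norm hb0]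
    have : π / b = 2 / R ^ 2 := by rw [hb]; field_simp
    rw [this, Real.div_rpow (by norm_num) (by positivity), ← Real.rpow_natCast R 2,
      ← Real.rpow_mul hR.le, ← Real.rpow_natCast R 3]
    simp
    norm_num
  have hI : Integrable (fun v : Spc 3 => rexp (-b * ‖v‖ ^ 2)) := by
    refine Integrable.of_integral_ne_zero ?_
    rw [hgauss]; positivity
  have h1 : ∫⁻ x : Spc 3, ENNReal.ofReal (rexp (-b * ‖x - w‖ ^ 2)) =
      ENNReal.ofReal (2 ^ (3 / 2 : ℝ) / R ^ 3) := by
    rw [lintegral_sub_right_eq_self (fun x : Spc 3 => ENNReal.ofReal (rexp (-b * ‖x‖ ^ 2))) (w : Spc 3),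
      ← ofReal_integral_eq_lintegral_ofReal hI (ae_of_all _ fun _ => (Real.exp_pos _).le), hgauss]
  rw [polar_lintegral _ (by fun_prop)] at h1
  have h2 : (∫⁻ o, ENNReal.ofReal (rexp (-(π * R ^ 2 * ‖(o : Spc 3) - w‖ ^ 2))) ∂(sphM 3)) *
      ENNReal.ofReal (rexp (-π) / R) ≤ ENNReal.ofReal (2 ^ (3 / 2 : ℝ) / R ^ 3) := by
    rw [← h1, ← lintegral_mul_const _ (by fun_prop)]
    refine lintegral_mono fun o => ?_
    calc ENNReal.ofReal (rexp (-(π * R ^ 2 * ‖(o : Spc 3) - w‖ ^ 2))) * ENNReal.ofReal (rexp (-π) / R)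
        = ∫⁻ r in Set.Ioo (1 : ℝ) (1 + 1 / R),
          ENNReal.ofReal (rexp (-(π * R ^ 2 * ‖(o : Spc 3) - w‖ ^ 2)) * rexp (-π)) := by
          rw [setLIntegral_const, Real.volume_Ioo, ← ENNReal.ofReal_mul (by positivity),
            ← ENNReal.ofReal_mul (by positivity)]
          congr 1; ring
      _ ≤ ∫⁻ r in Set.Ioo (1 : ℝ) (1 + 1 / R),
          ENNReal.ofReal (r ^ 2) * ENNReal.ofReal (rexp (-b * ‖r • (o : Spc 3) - w‖ ^ 2)) := by
          refine setLIntegral_mono' measurableSet_Ioo fun r hr => ?_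
          rw [← ENNReal.ofReal_mul (by positivity)]
          refine ENNReal.ofReal_le_ofReal ?_
          rw [← Real.exp_add]
          have hr1 : 1 ≤ r ^ 2 := by nlinarith [hr.1]
          refine le_trans ?_ (le_mul_of_one_le_left (Real.exp_pos _).le hr1)
          refine Real.exp_le_exp.2 ?_
          have ho : ‖(o : Spc 3)‖ = 1 := by simp
          have hn : ‖r • (o : Spc 3) - w‖ ≤ ‖(o : Spc 3) - w‖ + (r - 1) := by
            have : r • (o : Spc 3) - w = ((o : Spc 3) - w) + (r - 1) • (o : Spc 3) := by
              rw [sub_smul, one_smul]; abel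
            rw [this]
            refine (norm_add_le _ _).trans ?_
            rw [norm_smul, ho, mul_one, Real.norm_of_nonneg (by linarith [hr.1])]
          have hr2 : (r - 1) * R ≤ 1 := by
            have := hr.2
            have h3 : (r - 1) < 1 / R := by linarith
            rw [lt_div_iff₀ hR] at h3
            exact h3.le
          have hr3 : 0 ≤ (r - 1) * R := mul_nonneg (by linarith [hr.1]) hR.le
          have h4 : ‖r • (o : Spc 3) - w‖ ^ 2 ≤ 2 * ‖(o : Spc 3) - w‖ ^ 2 + 2 * (r - 1) ^ 2 := by
            nlinarith [norm_nonneg (r • (o : Spc 3) - w), sq_nonneg (‖(o : Spc 3) - w‖ - (r - 1)),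
              norm_nonneg ((o : Spc 3) - w)]
          have h5 : ((r - 1) * R) ^ 2 ≤ 1 := by nlinarith
          have h6 : b * ‖r • (o : Spc 3) - w‖ ^ 2 ≤
              b * (2 * ‖(o : Spc 3) - w‖ ^ 2 + 2 * (r - 1) ^ 2) := by gcongr
          have h7 : b * (2 * ‖(o : Spc 3) - w‖ ^ 2 + 2 * (r - 1) ^ 2) =
            π * R ^ 2 * ‖(o : Spc 3) - w‖ ^ 2 + π * ((r - 1) * R) ^ 2 := by rw [hb]; ring
          nlinarith [Real.pi_pos]
      _ ≤ _ := by
          refine lintegral_mono_set fun r hr => ?_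
          exact zero_lt_one.trans hr.1
  have hc : 0 < rexp (-π) / R := by positivity
  rw [← ENNReal.le_div_iff_mul_le (Or.inl (by simpa using hc)) (Or.inl ENNReal.ofReal_ne_top),
    ← ENNReal.ofReal_div_of_pos hc] at h2
  refine h2.trans_eq ?_
  congr 1
  rw [Real.exp_neg]
  field_simp

/-! ### The extension operator with Gaussian weight -/

/-- The Fourier extension operator of the unit sphere: the inverse Fourier integral of the
measure `g dS`. It is the (bilinear) transpose of `h ↦ invF h` restricted to the sphere. -/
noncomputable def sphExt (g : Metric.sphere (0 : Spc 3) 1 → ℂ) (ξ : Spc 3) : ℂ :=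
  ∫ o, g o * Complex.exp (2 * π * Complex.I * (inner ℝ (o : Spc 3) ξ : ℝ)) ∂(sphM 3)

lemma norm_char (t : ℝ) : ‖Complex.exp (2 * π * Complex.I * (t : ℂ))‖ = 1 := by
  have : 2 * π * Complex.I * (t : ℂ) = ((2 * π * t : ℝ) : ℂ) * Complex.I := by push_cast; ring
  rw [this, Complex.norm_exp_ofReal_mul_I]

lemma conj_char (t : ℝ) : (starRingEnd ℂ) (Complex.exp (2 * π * Complex.I * (t : ℂ))) =
    Complex.exp (2 * π * Complex.I * ((-t : ℝ) : ℂ)) := by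
  rw [← Complex.exp_conj]
  congr 1
  simp only [map_mul, Complex.conj_ofReal, Complex.conj_I, map_ofNat, Complex.ofReal_neg]
  ring

lemma integrable_sphere {g : Metric.sphere (0 : Spc 3) 1 → ℂ} (hg : Continuous g) :
    Integrable g (sphM 3) := by
  refine hg.integrable_of_hasCompactSupport ?_
  exact HasCompactSupport.of_compactSpace g

lemma continuous_sphExt {g : Metric.sphere (0 : Spc 3) 1 → ℂ} (hg : Continuous g) :
    Continuous (sphExt g) := by
  unfold sphExt
  refine continuous_of_dominated (bound := fun o => ‖g o‖) ?_ ?_ (integrable_sphere hg).norm ?_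
  · intro ξ
    exact Continuous.aestronglyMeasurable (by fun_prop)
  · intro ξ
    refine ae_of_all _ fun o => ?_
    rw [norm_mul, norm_char, mul_one]
  · refine ae_of_all _ fun o => ?_
    fun_prop

lemma norm_sphExt_le (g : Metric.sphere (0 : Spc 3) 1 → ℂ) (ξ : Spc 3) :
    ‖sphExt g ξ‖ ≤ ∫ o, ‖g o‖ ∂(sphM 3) := by
  refine (norm_integral_le_integral_norm _).trans_eq ?_
  simp only [norm_mul, norm_char, mul_one]

lemma integrable_gauss {b : ℝ} (hb : 0 < b) :
    Integrable (fun v : Spc 3 => rexp (-b * ‖v‖ ^ 2)) := by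
  refine Integrable.of_integral_ne_zero ?_
  rw [GaussianFourier.integral_rexp_neg_mul_sq_norm hb]; positivity

/-- Fourier transform of the Gaussian `exp (-π |ξ|² / R²)`. -/
lemma gauss_kernel (R : ℝ) (hR : 0 < R) (x : Spc 3) :
    ∫ ξ : Spc 3, Complex.exp (2 * π * Complex.I * (inner ℝ x ξ : ℝ)) *
      ((rexp (-(π / R ^ 2) * ‖ξ‖ ^ 2) : ℝ) : ℂ) =
      ((R ^ 3 * rexp (-(π * R ^ 2 * ‖x‖ ^ 2)) : ℝ) : ℂ) := by
  have h := GaussianFourier.integral_cexp_neg_mul_sq_norm_add (V := Spc 3)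
    (b := ((π / R ^ 2 : ℝ) : ℂ)) (by rw [Complex.ofReal_re]; positivity) (2 * π * Complex.I) x
  have hl : ∀ ξ : Spc 3, Complex.exp (2 * π * Complex.I * (inner ℝ x ξ : ℝ)) *
      ((rexp (-(π / R ^ 2) * ‖ξ‖ ^ 2) : ℝ) : ℂ) =
      Complex.exp (-((π / R ^ 2 : ℝ) : ℂ) * ‖ξ‖ ^ 2 + 2 * π * Complex.I * (inner ℝ x ξ : ℝ)) := by
    intro ξ
    rw [add_comm, Complex.exp_add, Complex.ofReal_exp]
    push_cast
    rfl
  simp only [hl]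
  rw [h]
  have h1 : (π : ℂ) / ((π / R ^ 2 : ℝ) : ℂ) = ((R ^ 2 : ℝ) : ℂ) := by
    rw [← Complex.ofReal_div]; congr 1; field_simp
  have h2 : (Module.finrank ℝ (Spc 3) / 2 : ℂ) = ((3 / 2 : ℝ) : ℂ) := by simp
  rw [h1, h2, ← Complex.ofReal_cpow (by positivity), ← Real.rpow_natCast R 2,
    ← Real.rpow_mul hR.le]
  have h3 : (2 * π * Complex.I) ^ 2 * (‖x‖ : ℂ) ^ 2 / (4 * ((π / R ^ 2 : ℝ) : ℂ)) =
      ((-(π * R ^ 2 * ‖x‖ ^ 2) : ℝ) : ℂ) := by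
    have : (π : ℂ) ≠ 0 := by exact_mod_cast Real.pi_ne_zero
    have hR' : (R : ℂ) ≠ 0 := by exact_mod_cast hR.ne'
    push_cast
    rw [mul_pow, Complex.I_sq]
    field_simp
    ring
  have h4 : R ^ (((2 : ℕ) : ℝ) * (3 / 2)) = R ^ 3 := by
    rw [← Real.rpow_natCast R 3]; norm_num
  simp only [Real.rpow_natCast] at *
  rw [h3, ← Complex.ofReal_exp, ← Complex.ofReal_mul, h4]

/-- Expanding the square and integrating in `ξ` first turns the Gaussian-weighted `L²` norm of the
extension into a quadratic form on the sphere whose kernel is again Gaussian. -/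
lemma gauss_ext_identity (R : ℝ) (hR : 0 < R) {g : Metric.sphere (0 : Spc 3) 1 → ℂ}
    (hg : Continuous g) :
    ∫ ξ, ((‖sphExt g ξ‖ ^ 2 * rexp (-(π / R ^ 2) * ‖ξ‖ ^ 2) : ℝ) : ℂ) =
      ∫ q : Metric.sphere (0 : Spc 3) 1 × Metric.sphere (0 : Spc 3) 1,
        g q.1 * (starRingEnd ℂ) (g q.2) *
          ((R ^ 3 * rexp (-(π * R ^ 2 * ‖(q.1 : Spc 3) - q.2‖ ^ 2)) : ℝ) : ℂ)
        ∂((sphM 3).prod (sphM 3)) := by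
  have hb : 0 < π / R ^ 2 := by positivity
  have h1 : ∀ ξ, ((‖sphExt g ξ‖ ^ 2 * rexp (-(π / R ^ 2) * ‖ξ‖ ^ 2) : ℝ) : ℂ) =
      ∫ q : Metric.sphere (0 : Spc 3) 1 × Metric.sphere (0 : Spc 3) 1,
        g q.1 * (starRingEnd ℂ) (g q.2) *
          (Complex.exp (2 * π * Complex.I * (inner ℝ ((q.1 : Spc 3) - q.2) ξ : ℝ)) *
          ((rexp (-(π / R ^ 2) * ‖ξ‖ ^ 2) : ℝ) : ℂ)) ∂((sphM 3).prod (sphM 3)) := by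
    intro ξ
    rw [Complex.ofReal_mul, Complex.ofReal_pow, ← Complex.mul_conj']
    unfold sphExt
    rw [← integral_conj, ← integral_prod_mul, ← integral_mul_const]
    refine integral_congr_ae (ae_of_all _ fun q => ?_)
    simp only [map_mul, conj_char, inner_sub_left]
    have : Complex.exp (2 * π * Complex.I * ((inner ℝ (q.1 : Spc 3) ξ - inner ℝ (q.2 : Spc 3) ξ : ℝ) : ℂ)) =
      Complex.exp (2 * π * Complex.I * ((inner ℝ (q.1 : Spc 3) ξ : ℝ) : ℂ)) *
      Complex.exp (2 * π * Complex.I * ((-inner ℝ (q.2 : Spc 3) ξ : ℝ) : ℂ)) := by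
      rw [← Complex.exp_add]; congr 1; push_cast; ring
    rw [this]
    ring
  simp only [h1]
  rw [integral_integral_swap]
  · refine integral_congr_ae (ae_of_all _ fun q => ?_)
    simp only
    rw [integral_const_mul, gauss_kernel R hR]
  · have hG : Integrable (fun q : Metric.sphere (0 : Spc 3) 1 × Metric.sphere (0 : Spc 3) 1 =>
        ‖g q.1‖ * ‖g q.2‖) ((sphM 3).prod (sphM 3)) :=
      (integrable_sphere hg).norm.mul_prod (integrable_sphere hg).norm
    have := (integrable_gauss hb).mul_prod hG
    refine this.mono' (Continuous.aestronglyMeasurable ?_) (ae_of_all _ fun q => ?_)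
    · have : Continuous (fun q : Spc 3 × (Metric.sphere (0 : Spc 3) 1 × Metric.sphere (0 : Spc 3) 1) =>
        inner ℝ ((q.2.1 : Spc 3) - q.2.2) q.1) := by fun_prop
      have h3 := Complex.continuous_conj
      simp only [Function.uncurry_def]
      fun_prop
    · simp only [Function.uncurry, norm_mul, norm_char, RCLike.norm_conj, Complex.norm_real, one_mul,
        Real.norm_of_nonneg (Real.exp_pos _).le]
      rw [mul_comm]

/-- Schur test for the Gaussian kernel on the sphere, with row sums bounded by `gauss_sphere`. -/
lemma schur_sphere (R : ℝ) (hR : 0 < R) {g : Metric.sphere (0 : Spc 3) 1 → ℂ}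
    (hg : Continuous g) :
    ∫⁻ q : Metric.sphere (0 : Spc 3) 1 × Metric.sphere (0 : Spc 3) 1,
        ‖g q.1‖ₑ * ‖g q.2‖ₑ *
          ENNReal.ofReal (rexp (-(π * R ^ 2 * ‖(q.1 : Spc 3) - q.2‖ ^ 2)))
        ∂((sphM 3).prod (sphM 3)) ≤
      ENNReal.ofReal (rexp π * 2 ^ (3 / 2 : ℝ) / R ^ 2) * ∫⁻ o, ‖g o‖ₑ ^ 2 ∂(sphM 3) := by
  set k : Metric.sphere (0 : Spc 3) 1 → Metric.sphere (0 : Spc 3) 1 → ℝ≥0∞ :=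
    fun o o' => ENNReal.ofReal (rexp (-(π * R ^ 2 * ‖(o : Spc 3) - o'‖ ^ 2))) with hk
  have hsymm : ∀ o o', k o o' = k o' o := by
    intro o o'; simp only [hk, norm_sub_rev]
  have hgm : Measurable g := hg.measurable
  have hkm : Measurable (fun q : Metric.sphere (0 : Spc 3) 1 × Metric.sphere (0 : Spc 3) 1 =>
      k q.1 q.2) := by simp only [hk]; fun_prop
  have hA : ∫⁻ q : Metric.sphere (0 : Spc 3) 1 × Metric.sphere (0 : Spc 3) 1,
      ‖g q.1‖ₑ ^ 2 * k q.1 q.2 ∂((sphM 3).prod (sphM 3)) ≤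
      ENNReal.ofReal (rexp π * 2 ^ (3 / 2 : ℝ) / R ^ 2) * ∫⁻ o, ‖g o‖ₑ ^ 2 ∂(sphM 3) := by
    rw [lintegral_prod _ (by fun_prop), ← lintegral_const_mul _ (by fun_prop)]
    refine lintegral_mono fun o => ?_
    simp only
    rw [lintegral_const_mul _ (by fun_prop), mul_comm]
    gcongr
    simp only [hsymm o]
    exact gauss_sphere R hR o
  have hB : ∫⁻ q : Metric.sphere (0 : Spc 3) 1 × Metric.sphere (0 : Spc 3) 1,
      ‖g q.2‖ₑ ^ 2 * k q.1 q.2 ∂((sphM 3).prod (sphM 3)) ≤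
      ENNReal.ofReal (rexp π * 2 ^ (3 / 2 : ℝ) / R ^ 2) * ∫⁻ o, ‖g o‖ₑ ^ 2 ∂(sphM 3) := by
    rw [← lintegral_prod_swap]
    simpa only [Prod.fst_swap, Prod.snd_swap, hsymm] using hA
  have hAB : ∀ a b : ℝ≥0∞, 2 * (a * b) ≤ a ^ 2 + b ^ 2 := by
    intro a b
    rcases le_total a b with h | h
    · obtain ⟨c, rfl⟩ := exists_add_of_le h
      calc 2 * (a * (a + c)) ≤ 2 * (a * (a + c)) + c ^ 2 := le_self_add
        _ = _ := by ring
    · obtain ⟨c, rfl⟩ := exists_add_of_le h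
      calc 2 * ((b + c) * b) ≤ 2 * ((b + c) * b) + c ^ 2 := le_self_add
        _ = _ := by ring
  have h2 : 2 * ∫⁻ q : Metric.sphere (0 : Spc 3) 1 × Metric.sphere (0 : Spc 3) 1,
        ‖g q.1‖ₑ * ‖g q.2‖ₑ * k q.1 q.2 ∂((sphM 3).prod (sphM 3)) ≤
      2 * (ENNReal.ofReal (rexp π * 2 ^ (3 / 2 : ℝ) / R ^ 2) * ∫⁻ o, ‖g o‖ₑ ^ 2 ∂(sphM 3)) := by
    rw [two_mul (ENNReal.ofReal _ * _)]
    refine le_trans ?_ (add_le_add hA hB)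
    rw [← lintegral_const_mul _ (by fun_prop), ← lintegral_add_left (by fun_prop)]
    refine lintegral_mono fun q => ?_
    simp only
    rw [← add_mul, ← mul_assoc]
    gcongr
    exact hAB _ _
  exact (ENNReal.mul_le_mul_iff_right (by norm_num) (by norm_num)).1 h2

/-- The extension of `g` has mass `O(R ‖g‖²)` in the ball of radius `R`, with a Gaussian cutoff in
place of the sharp one. -/
lemma gauss_ext (R : ℝ) (hR : 0 < R) {g : Metric.sphere (0 : Spc 3) 1 → ℂ} (hg : Continuous g) :
    ∫⁻ ξ, ‖sphExt g ξ‖ₑ ^ 2 * ENNReal.ofReal (rexp (-(π / R ^ 2) * ‖ξ‖ ^ 2)) ≤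
      ENNReal.ofReal (rexp π * 2 ^ (3 / 2 : ℝ) * R) * ∫⁻ o, ‖g o‖ₑ ^ 2 ∂(sphM 3) := by
  have hb : 0 < π / R ^ 2 := by positivity
  have hc := continuous_sphExt hg
  have hI : Integrable (fun ξ => ‖sphExt g ξ‖ ^ 2 * rexp (-(π / R ^ 2) * ‖ξ‖ ^ 2)) := by
    refine ((integrable_gauss hb).const_mul ((∫ o, ‖g o‖ ∂(sphM 3)) ^ 2)).mono'
      (Continuous.aestronglyMeasurable (by fun_prop)) (ae_of_all _ fun ξ => ?_)
    rw [Real.norm_of_nonneg (by positivity)]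
    gcongr
    exact norm_sphExt_le g ξ
  have h1 : ∫⁻ ξ, ‖sphExt g ξ‖ₑ ^ 2 * ENNReal.ofReal (rexp (-(π / R ^ 2) * ‖ξ‖ ^ 2)) =
      ‖∫ ξ, ((‖sphExt g ξ‖ ^ 2 * rexp (-(π / R ^ 2) * ‖ξ‖ ^ 2) : ℝ) : ℂ)‖ₑ := by
    rw [integral_complex_ofReal, ← ofReal_norm, Complex.norm_real, Real.norm_of_nonneg
      (integral_nonneg fun ξ => by positivity), ofReal_integral_eq_lintegral_ofReal hI
      (ae_of_all _ fun ξ => by positivity)]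
    refine lintegral_congr fun ξ => ?_
    rw [ENNReal.ofReal_mul (by positivity), ENNReal.ofReal_pow (by positivity), ofReal_norm]
  rw [h1, gauss_ext_identity R hR hg]
  refine (enorm_integral_le_lintegral_enorm _).trans ?_
  have h2 : ∀ q : Metric.sphere (0 : Spc 3) 1 × Metric.sphere (0 : Spc 3) 1,
      ‖g q.1 * (starRingEnd ℂ) (g q.2) *
          ((R ^ 3 * rexp (-(π * R ^ 2 * ‖(q.1 : Spc 3) - q.2‖ ^ 2)) : ℝ) : ℂ)‖ₑ =
      ENNReal.ofReal (R ^ 3) * (‖g q.1‖ₑ * ‖g q.2‖ₑ *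
          ENNReal.ofReal (rexp (-(π * R ^ 2 * ‖(q.1 : Spc 3) - q.2‖ ^ 2)))) := by
    intro q
    rw [enorm_mul, enorm_mul, ← ofReal_norm ((starRingEnd ℂ) (g q.2)), RCLike.norm_conj, ofReal_norm,
      ← ofReal_norm ((_ : ℝ) : ℂ), Complex.norm_real, Real.norm_of_nonneg (by positivity),
      ENNReal.ofReal_mul (by positivity)]
    ring
  simp only [h2]
  rw [lintegral_const_mul' _ _ ENNReal.ofReal_ne_top]
  refine (mul_le_mul_right (schur_sphere R hR hg) _).trans_eq ?_
  rw [← mul_assoc, ← ENNReal.ofReal_mul (by positivity)]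
  congr 2
  field_simp

/-! ### The weighted extension estimate and the `L²` trace estimate -/

/-- The inverse Fourier integral of `h` at `x`. -/
noncomputable def invF (h : Spc 3 → ℂ) (x : Spc 3) : ℂ :=
  ∫ ξ, h ξ * Complex.exp (2 * π * Complex.I * (inner ℝ x ξ : ℝ))

lemma continuous_invF {h : Spc 3 → ℂ} (hh : Integrable h) : Continuous (invF h) := by
  unfold invF
  refine continuous_of_dominated (bound := fun o => ‖h o‖) ?_ ?_ hh.norm ?_
  · intro ξ
    exact hh.aestronglyMeasurable.mul (Continuous.aestronglyMeasurable (by fun_prop))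
  · intro ξ
    refine ae_of_all _ fun o => ?_
    rw [norm_mul, norm_char, mul_one]
  · refine ae_of_all _ fun o => ?_
    fun_prop

lemma lintegral_cauchy_schwarz {α : Type*} [MeasurableSpace α] {μ : Measure α} {f g : α → ℝ≥0∞}
    (hf : AEMeasurable f μ) (hg : AEMeasurable g μ) :
    (∫⁻ a, f a * g a ∂μ) ^ 2 ≤ (∫⁻ a, f a ^ 2 ∂μ) * ∫⁻ a, g a ^ 2 ∂μ := by
  have h := ENNReal.lintegral_mul_le_Lp_mul_Lq μ Real.HolderConjugate.two_two hf hg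
  simp only [Pi.mul_apply, ENNReal.rpow_two] at h
  refine (pow_le_pow_left' h 2).trans_eq ?_
  rw [mul_pow, ← ENNReal.rpow_two, ← ENNReal.rpow_two, ← ENNReal.rpow_mul, ← ENNReal.rpow_mul]
  norm_num

/-- The power weight `x ^ (-2t)` is dominated by a superposition of Gaussians of widths `R > A`.
Only the widths `x < R < 2 x` are needed for the lower bound of the integral. -/
lemma weight_le (t A : ℝ) (ht : 1 / 2 < t) (hA : 0 < A) (x : ℝ) (hx : A ≤ x) :
    ENNReal.ofReal (x ^ (-(2 * t))) ≤ ENNReal.ofReal (2 ^ (2 * t + 1) * rexp π) *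
      ∫⁻ R in Set.Ioi A, ENNReal.ofReal (R ^ (-(2 * t) - 1)) *
        ENNReal.ofReal (rexp (-(π / R ^ 2) * x ^ 2)) := by
  have hx0 : 0 < x := hA.trans_le hx
  have h1 : ENNReal.ofReal ((2 * x) ^ (-(2 * t) - 1) * rexp (-π) * x) ≤
      ∫⁻ R in Set.Ioi A, ENNReal.ofReal (R ^ (-(2 * t) - 1)) *
        ENNReal.ofReal (rexp (-(π / R ^ 2) * x ^ 2)) := by
    calc ENNReal.ofReal ((2 * x) ^ (-(2 * t) - 1) * rexp (-π) * x)
        = ∫⁻ R in Set.Ioo x (2 * x), ENNReal.ofReal ((2 * x) ^ (-(2 * t) - 1) * rexp (-π)) := by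
          rw [setLIntegral_const, Real.volume_Ioo, ← ENNReal.ofReal_mul (by positivity)]
          congr 1; ring
      _ ≤ ∫⁻ R in Set.Ioo x (2 * x), ENNReal.ofReal (R ^ (-(2 * t) - 1)) *
        ENNReal.ofReal (rexp (-(π / R ^ 2) * x ^ 2)) := by
          refine setLIntegral_mono' measurableSet_Ioo fun R hR => ?_
          have hR0 : 0 < R := hx0.trans hR.1
          rw [← ENNReal.ofReal_mul (by positivity)]
          refine ENNReal.ofReal_le_ofReal (mul_le_mul ?_ ?_ (by positivity) (by positivity))
          · exact Real.rpow_le_rpow_of_nonpos hR0 hR.2.le (by linarith)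
          · refine Real.exp_le_exp.2 ?_
            have : x ^ 2 ≤ R ^ 2 := by gcongr; exact hR.1.le
            have h2 : x ^ 2 / R ^ 2 ≤ 1 := by rw [div_le_one (by positivity)]; exact this
            have h3 : -(π / R ^ 2) * x ^ 2 = - (π * (x ^ 2 / R ^ 2)) := by ring
            rw [h3]
            nlinarith [Real.pi_pos]
      _ ≤ _ := lintegral_mono_set fun R hR => lt_of_le_of_lt hx hR.1
  refine le_trans ?_ (mul_le_mul_right h1 _)
  rw [← ENNReal.ofReal_mul (by positivity)]
  refine le_of_eq ?_
  congr 1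
  rw [Real.mul_rpow (by norm_num) hx0.le, Real.exp_neg, Real.rpow_sub hx0, Real.rpow_one,
    show (-(2 * t) - 1) = -(2 * t + 1) by ring, Real.rpow_neg (by norm_num : (0 : ℝ) ≤ 2) (2 * t + 1)]
  have : (0 : ℝ) < 2 ^ (2 * t + 1) := by positivity
  field_simp

/-- `gauss_ext` integrated against `R ^ (-2t - 1) dR` over `R > A`; the condition `1 / 2 < t` makes
`∫_A^∞ R ^ (-2t) dR` finite and produces the factor `A ^ (1 - 2t)`. -/
lemma ext_weighted (t : ℝ) (ht : 1 / 2 < t) : ∃ C : ℝ, 0 < C ∧ ∀ A : ℝ, 0 < A →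
    ∀ g : Metric.sphere (0 : Spc 3) 1 → ℂ, Continuous g →
    ∫⁻ ξ in {ξ : Spc 3 | A < ‖ξ‖}, ‖sphExt g ξ‖ₑ ^ 2 * ENNReal.ofReal (‖ξ‖ ^ (-(2 * t))) ≤
      ENNReal.ofReal (C * A ^ (1 - 2 * t)) * ∫⁻ o, ‖g o‖ₑ ^ 2 ∂(sphM 3) := by
  set K : ℝ := 2 ^ (2 * t + 1) * rexp π with hK
  set c : ℝ := rexp π * 2 ^ (3 / 2 : ℝ) with hc
  have h2t : 0 < 2 * t - 1 := by linarith
  refine ⟨K * (c / (2 * t - 1)), by positivity, fun A hA g hg => ?_⟩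
  have hcont := continuous_sphExt hg
  have hms : MeasurableSet {ξ : Spc 3 | A < ‖ξ‖} := measurableSet_lt measurable_const measurable_norm
  set X := ∫⁻ o, ‖g o‖ₑ ^ 2 ∂(sphM 3) with hX
  calc ∫⁻ ξ in {ξ : Spc 3 | A < ‖ξ‖}, ‖sphExt g ξ‖ₑ ^ 2 * ENNReal.ofReal (‖ξ‖ ^ (-(2 * t)))
      ≤ ∫⁻ ξ in {ξ : Spc 3 | A < ‖ξ‖}, ‖sphExt g ξ‖ₑ ^ 2 * (ENNReal.ofReal K *
      ∫⁻ R in Set.Ioi A, ENNReal.ofReal (R ^ (-(2 * t) - 1)) *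
        ENNReal.ofReal (rexp (-(π / R ^ 2) * ‖ξ‖ ^ 2))) := by
        refine setLIntegral_mono' hms fun ξ hξ => ?_
        gcongr
        exact weight_le t A ht hA _ (le_of_lt hξ)
    _ ≤ ∫⁻ ξ, ‖sphExt g ξ‖ₑ ^ 2 * (ENNReal.ofReal K *
      ∫⁻ R in Set.Ioi A, ENNReal.ofReal (R ^ (-(2 * t) - 1)) *
        ENNReal.ofReal (rexp (-(π / R ^ 2) * ‖ξ‖ ^ 2))) := setLIntegral_le_lintegral _ _
    _ = ENNReal.ofReal K * ∫⁻ ξ, ∫⁻ R in Set.Ioi A, ENNReal.ofReal (R ^ (-(2 * t) - 1)) *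
        (‖sphExt g ξ‖ₑ ^ 2 * ENNReal.ofReal (rexp (-(π / R ^ 2) * ‖ξ‖ ^ 2))) := by
        rw [← lintegral_const_mul' _ _ ENNReal.ofReal_ne_top]
        refine lintegral_congr fun ξ => ?_
        rw [mul_left_comm, ← lintegral_const_mul' _ _ (by simp)]
        congr 1
        refine lintegral_congr fun R => ?_
        ring
    _ = ENNReal.ofReal K * ∫⁻ R in Set.Ioi A, ENNReal.ofReal (R ^ (-(2 * t) - 1)) * ∫⁻ ξ,
        (‖sphExt g ξ‖ₑ ^ 2 * ENNReal.ofReal (rexp (-(π / R ^ 2) * ‖ξ‖ ^ 2))) := by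
        rw [lintegral_lintegral_swap]
        · congr 1
          refine lintegral_congr fun R => ?_
          rw [lintegral_const_mul' _ _ ENNReal.ofReal_ne_top]
        · refine Measurable.aemeasurable ?_
          have := hcont.measurable
          simp only [Function.uncurry_def]
          fun_prop
    _ ≤ ENNReal.ofReal K * ∫⁻ R in Set.Ioi A, ENNReal.ofReal (c * R ^ (-(2 * t))) * X := by
        refine mul_le_mul_right ?_ _
        refine setLIntegral_mono' (measurableSet_Ioi (a := A)) fun R hR => ?_
        have hR0 : 0 < R := hA.trans hR
        refine (mul_le_mul_right (gauss_ext R hR0 hg) _).trans_eq ?_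
        rw [← mul_assoc, ← ENNReal.ofReal_mul (by positivity)]
        congr 2
        rw [Real.rpow_sub hR0, Real.rpow_one]
        field_simp
        rw [hc]
    _ = _ := by
        rw [lintegral_mul_const _ (by fun_prop), ← ofReal_integral_eq_lintegral_ofReal, ← mul_assoc,
          ← ENNReal.ofReal_mul (by positivity), integral_const_mul,
          integral_Ioi_rpow_of_lt (by linarith) hA]
        · congr 2
          rw [show -(2 * t) + 1 = 1 - 2 * t by ring]
          have : 1 - 2 * t ≠ 0 := by linarith
          rw [show 1 - 2 * t = -(2 * t - 1) by ring]
          field_simp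
        · exact (integrableOn_Ioi_rpow_of_lt (by linarith) hA).const_mul c
        · refine (ae_restrict_iff' measurableSet_Ioi).2 (ae_of_all _ fun R hR => ?_)
          have hR0 : 0 < R := hA.trans hR
          simp only [Pi.zero_apply]
          positivity

/-- `L²` trace estimate for functions with frequencies larger than `A`, dual to `ext_weighted`:
the square of the trace norm is the pairing of `h` with the extension of the conjugate trace. -/
lemma trace_L2 (t : ℝ) (ht : 1 / 2 < t) : ∃ C : ℝ, 0 < C ∧ ∀ A : ℝ, 0 < A →
    ∀ h : Spc 3 → ℂ, Measurable h → Integrable h → (∀ ξ, ‖ξ‖ ≤ A → h ξ = 0) →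
    ∫⁻ o : Metric.sphere (0 : Spc 3) 1, ‖invF h o‖ₑ ^ 2 ∂(sphM 3) ≤
      ENNReal.ofReal (C * A ^ (1 - 2 * t)) * ∫⁻ ξ, ‖h ξ‖ₑ ^ 2 * ENNReal.ofReal (‖ξ‖ ^ (2 * t)) := by
  obtain ⟨C, hC, hCe⟩ := ext_weighted t ht
  refine ⟨C, hC, fun A hA h hm hI hsupp => ?_⟩
  set X := ∫⁻ o : Metric.sphere (0 : Spc 3) 1, ‖invF h o‖ₑ ^ 2 ∂(sphM 3) with hX
  set H := ∫⁻ ξ, ‖h ξ‖ₑ ^ 2 * ENNReal.ofReal (‖ξ‖ ^ (2 * t)) with hH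
  have hcf := continuous_invF hI
  have hcf' : Continuous (fun o : Metric.sphere (0 : Spc 3) 1 => invF h o) := by fun_prop
  set g : Metric.sphere (0 : Spc 3) 1 → ℂ := fun o => (starRingEnd ℂ) (invF h o) with hg
  have hgc : Continuous g := Complex.continuous_conj.comp hcf'
  have hsqI : Integrable (fun o : Metric.sphere (0 : Spc 3) 1 => ‖invF h o‖ ^ 2) (sphM 3) := by
    refine Continuous.integrable_of_hasCompactSupport (by fun_prop) ?_
    exact HasCompactSupport.of_compactSpace _
  have hXr : X = ENNReal.ofReal (∫ o : Metric.sphere (0 : Spc 3) 1, ‖invF h o‖ ^ 2 ∂(sphM 3)) := by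
    rw [ofReal_integral_eq_lintegral_ofReal hsqI (ae_of_all _ fun ξ => by positivity)]
    refine lintegral_congr fun ξ => ?_
    rw [ENNReal.ofReal_pow (by positivity), ofReal_norm]
  have hXfin : X ≠ ⊤ := by rw [hXr]; exact ENNReal.ofReal_ne_top
  have hgX : ∫⁻ o, ‖g o‖ₑ ^ 2 ∂(sphM 3) = X := by
    refine lintegral_congr fun o => ?_
    rw [hg]; simp only
    rw [← ofReal_norm ((starRingEnd ℂ) _), RCLike.norm_conj, ofReal_norm]
  have hdual : X = ‖∫ ξ, h ξ * sphExt g ξ‖ₑ := by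
    have e1 : ∫ ξ, h ξ * sphExt g ξ = ∫ o, g o * invF h o ∂(sphM 3) := by
      unfold sphExt
      have : ∀ o : Metric.sphere (0 : Spc 3) 1, g o * invF h o =
        ∫ ξ, h ξ * (g o * Complex.exp (2 * π * Complex.I * (inner ℝ (o : Spc 3) ξ : ℝ))) := by
        intro o
        rw [invF, ← integral_const_mul]
        congr 1; ext ξ; ring
      simp only [this, ← integral_const_mul]
      refine integral_integral_swap ?_
      refine (hI.norm.mul_prod (integrable_sphere hgc).norm).mono' ?_ (ae_of_all _ fun q => ?_)
      · refine Measurable.aestronglyMeasurable ?_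
        have := hgc.measurable
        simp only [Function.uncurry_def]
        fun_prop
      · simp only [Function.uncurry, norm_mul, norm_char, mul_one]
        exact le_rfl
    have e2 : ∀ o : Metric.sphere (0 : Spc 3) 1, g o * invF h o = ((‖invF h o‖ ^ 2 : ℝ) : ℂ) := by
      intro o
      rw [hg]; simp only
      rw [Complex.conj_mul', Complex.ofReal_pow]
    rw [e1]
    simp only [e2]
    rw [integral_complex_ofReal, ← ofReal_norm, Complex.norm_real, Real.norm_of_nonneg
      (integral_nonneg fun ξ => by positivity), hXr]
  have hms : MeasurableSet {ξ : Spc 3 | A < ‖ξ‖} := measurableSet_lt measurable_const measurable_norm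
  have hGm := (continuous_sphExt hgc).measurable
  have hle : X ≤ ∫⁻ ξ in {ξ : Spc 3 | A < ‖ξ‖}, (‖h ξ‖ₑ * ENNReal.ofReal (‖ξ‖ ^ t)) *
      (‖sphExt g ξ‖ₑ * ENNReal.ofReal (‖ξ‖ ^ (-t))) := by
    rw [hdual]
    refine (enorm_integral_le_lintegral_enorm _).trans ?_
    rw [← lintegral_indicator hms]
    refine lintegral_mono fun ξ => ?_
    by_cases hξ : A < ‖ξ‖
    · rw [Set.indicator_of_mem (by exact hξ)]
      have hξ0 : 0 < ‖ξ‖ := hA.trans hξ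
      rw [enorm_mul, mul_mul_mul_comm, ← ENNReal.ofReal_mul (by positivity), ← Real.rpow_add hξ0]
      simp
    · rw [hsupp ξ (not_lt.1 hξ)]; simp
  have hsq : X ^ 2 ≤ H * (ENNReal.ofReal (C * A ^ (1 - 2 * t)) * X) := by
    refine (pow_le_pow_left' hle 2).trans ((lintegral_cauchy_schwarz (by fun_prop) (by fun_prop)).trans ?_)
    refine mul_le_mul' ?_ ?_
    · refine (setLIntegral_le_lintegral _ _).trans_eq ?_
      refine lintegral_congr fun ξ => ?_
      rw [mul_pow, ← ENNReal.ofReal_pow (by positivity), ← Real.rpow_mul_natCast (by positivity), mul_comm t]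
      rfl
    · have := hCe A hA g hgc
      rw [hgX] at this
      refine le_trans (le_of_eq ?_) this
      refine lintegral_congr fun ξ => ?_
      rw [mul_pow, ← ENNReal.ofReal_pow (by positivity), ← Real.rpow_mul_natCast (by positivity)]
      congr 3; push_cast; ring
  -- The factor `X` is cancelled from both sides of `hsq`, which requires `0 < X < ∞`.
  by_cases hX0 : X = 0
  · rw [hX0]; exact zero_le
  · rw [sq, ← mul_assoc, ENNReal.mul_le_mul_iff_left hX0 hXfin] at hsq
    rwa [mul_comm]

/-! ### Level sets and the normalised inequality -/

lemma lintegral_rpow_Ioo (K q B : ℝ) (hK : 0 ≤ K) (hq : -1 < q) (hB : 0 ≤ B) :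
    ∫⁻ r in Set.Ioo 0 B, ENNReal.ofReal (K * r ^ q) =
      ENNReal.ofReal (K * (B ^ (q + 1) / (q + 1))) := by
  have hi : IntegrableOn (fun r : ℝ => r ^ q) (Set.Ioc 0 B) := by
    rw [← intervalIntegrable_iff_integrableOn_Ioc_of_le hB]
    exact intervalIntegral.intervalIntegrable_rpow' hq
  rw [restrict_Ioo_eq_restrict_Ioc, ← ofReal_integral_eq_lintegral_ofReal (hi.const_mul K),
    integral_const_mul, ← intervalIntegral.integral_of_le hB, integral_rpow (Or.inl hq),
    Real.zero_rpow (by linarith), sub_zero]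
  refine (ae_restrict_iff' measurableSet_Ioc).2 (ae_of_all _ fun R hR => ?_)
  exact mul_nonneg hK (Real.rpow_nonneg hR.1.le _)

lemma low_weight (s : ℝ) (hs2 : s < 3 / 2) (A : ℝ) (hA : 0 < A) :
    ∫⁻ ξ in {ξ : Spc 3 | ‖ξ‖ ≤ A}, ENNReal.ofReal (‖ξ‖ ^ (-(2 * s))) =
      ENNReal.ofReal ((1 / (3 - 2 * s)) * A ^ (3 - 2 * s)) * sphM 3 Set.univ := by
  have hms : MeasurableSet {ξ : Spc 3 | ‖ξ‖ ≤ A} := measurableSet_le measurable_norm measurable_const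
  rw [← lintegral_indicator hms, polar_lintegral _ (Measurable.indicator (by fun_prop) hms)]
  have : ∀ o : Metric.sphere (0 : Spc 3) 1, ∫⁻ r in Set.Ioi (0 : ℝ), ENNReal.ofReal (r ^ 2) *
      ({ξ : Spc 3 | ‖ξ‖ ≤ A}.indicator (fun ξ => ENNReal.ofReal (‖ξ‖ ^ (-(2 * s))))
        (r • (o : Spc 3))) = ENNReal.ofReal ((1 / (3 - 2 * s)) * A ^ (3 - 2 * s)) := by
    intro o
    have h1 := lintegral_rpow_Ioo 1 (2 - 2 * s) A zero_le_one (by linarith) hA.le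
    have h2 : ENNReal.ofReal ((1 / (3 - 2 * s)) * A ^ (3 - 2 * s)) =
        ENNReal.ofReal (1 * (A ^ (2 - 2 * s + 1) / (2 - 2 * s + 1))) := by
      congr 1
      rw [show 2 - 2 * s + 1 = 3 - 2 * s by ring]; ring
    rw [h2, ← h1, restrict_Ioo_eq_restrict_Ioc, ← lintegral_indicator measurableSet_Ioi,
      ← lintegral_indicator measurableSet_Ioc]
    refine lintegral_congr fun r => ?_
    by_cases hr : 0 < r
    · have hn : ‖r • (o : Spc 3)‖ = r := by
        rw [norm_smul, Real.norm_of_nonneg hr.le]; simp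
      rw [Set.indicator_of_mem (by exact hr)]
      by_cases hrA : r ≤ A
      · rw [Set.indicator_of_mem (by simpa [hn] using hrA), Set.indicator_of_mem (by exact ⟨hr, hrA⟩),
          hn, ← ENNReal.ofReal_mul (by positivity), ← Real.rpow_natCast r 2, ← Real.rpow_add hr]
        congr 1
        rw [one_mul]; congr 1
      · rw [Set.indicator_of_notMem (by simpa [hn] using hrA),
          Set.indicator_of_notMem (fun h => hrA h.2), mul_zero]
    · rw [Set.indicator_of_notMem (by exact hr), Set.indicator_of_notMem (fun h => hr h.1)]
  simp only [this, lintegral_const]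

/-- Cauchy–Schwarz with the weight `‖ξ‖ ^ (2 s)`: the low frequencies of `h` are small in `L¹`. The
weight `‖ξ‖ ^ (-2 s)` is locally integrable on ℝ³ because `s < 3 / 2`. -/
lemma low_freq (s : ℝ) (hs2 : s < 3 / 2) : ∃ C : ℝ, 0 < C ∧ ∀ A : ℝ, 0 < A →
    ∀ h : Spc 3 → ℂ, Measurable h →
    (∫⁻ ξ in {ξ : Spc 3 | ‖ξ‖ ≤ A}, ‖h ξ‖ₑ) ^ 2 ≤
      ENNReal.ofReal (C * A ^ (3 - 2 * s)) * ∫⁻ ξ, ‖h ξ‖ₑ ^ 2 * ENNReal.ofReal (‖ξ‖ ^ (2 * s)) := by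
  have h3 : 0 < 3 - 2 * s := by linarith
  refine ⟨(1 / (3 - 2 * s)) * ((sphM 3).real Set.univ + 1), by positivity, fun A hA h hm => ?_⟩
  have hms : MeasurableSet {ξ : Spc 3 | ‖ξ‖ ≤ A} := measurableSet_le measurable_norm measurable_const
  have h1 : ∫⁻ ξ in {ξ : Spc 3 | ‖ξ‖ ≤ A}, ‖h ξ‖ₑ =
      ∫⁻ ξ in {ξ : Spc 3 | ‖ξ‖ ≤ A}, ENNReal.ofReal (‖ξ‖ ^ (-s)) *
        (‖h ξ‖ₑ * ENNReal.ofReal (‖ξ‖ ^ s)) := by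
    refine lintegral_congr_ae (ae_restrict_of_ae ?_)
    filter_upwards [Measure.ae_ne (volume : Measure (Spc 3)) 0] with ξ hξ
    have hξ0 : 0 < ‖ξ‖ := norm_pos_iff.2 hξ
    rw [mul_left_comm, ← ENNReal.ofReal_mul (by positivity), ← Real.rpow_add hξ0]
    simp
  rw [h1]
  refine (lintegral_cauchy_schwarz (by fun_prop) (by fun_prop)).trans ?_
  refine mul_le_mul' ?_ ((setLIntegral_le_lintegral _ _).trans_eq ?_)
  · have h2 : ∀ ξ : Spc 3, ENNReal.ofReal (‖ξ‖ ^ (-s)) ^ 2 = ENNReal.ofReal (‖ξ‖ ^ (-(2 * s))) := by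
      intro ξ
      rw [← ENNReal.ofReal_pow (by positivity), ← Real.rpow_mul_natCast (by positivity)]
      congr 2; push_cast; ring
    simp only [h2]
    rw [low_weight s hs2 A hA, ← ENNReal.ofReal_toReal (measure_ne_top (sphM 3) Set.univ),
      ← ENNReal.ofReal_mul (by positivity)]
    refine ENNReal.ofReal_le_ofReal ?_
    rw [mul_right_comm]
    gcongr
    exact le_add_of_nonneg_right zero_le_one
  · refine lintegral_congr fun ξ => ?_
    rw [mul_pow, ← ENNReal.ofReal_pow (by positivity), ← Real.rpow_mul_natCast (by positivity), mul_comm s]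
    rfl

/-- Level-set estimate. At height `l` the function is split at the frequency `A` for which the low
part is at most `l / 2`; the high part is then estimated by Chebyshev and `trace_L2`. The condition
`A < ‖ξ‖` is expressed as `l < d * ‖ξ‖ ^ (3 / 2 - s)`, ready for integration in `l`. -/
lemma level_set (s : ℝ) (hs2 : s < 3 / 2) (t : ℝ) (ht : 1 / 2 < t) :
    ∃ d C : ℝ, 0 < d ∧ 0 < C ∧
    ∀ h : Spc 3 → ℂ, Measurable h → Integrable h →
      ∫⁻ ξ, ‖h ξ‖ₑ ^ 2 * ENNReal.ofReal (‖ξ‖ ^ (2 * s)) ≤ 1 → ∀ l : ℝ, 0 < l →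
      sphM 3 {o | l < ‖invF h o‖} ≤ ENNReal.ofReal (C * l ^ ((1 - 2 * t) / (3 / 2 - s) - 2)) *
        ∫⁻ ξ, {ξ : Spc 3 | l < d * ‖ξ‖ ^ (3 / 2 - s)}.indicator
          (fun ξ => ‖h ξ‖ₑ ^ 2 * ENNReal.ofReal (‖ξ‖ ^ (2 * t))) ξ := by
  obtain ⟨c₁, hc₁, hlow⟩ := low_freq s hs2
  obtain ⟨c₂, hc₂, hhigh⟩ := trace_L2 t ht
  set a := 3 / 2 - s with ha
  have ha0 : 0 < a := by linarith
  set d := 2 * √c₁ with hd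
  have hd0 : 0 < d := by positivity
  refine ⟨d, 4 * c₂ * d ^ (-((1 - 2 * t) / a)), hd0, by positivity, fun h hm hI hN l hl => ?_⟩
  -- The cutoff frequency with `√c₁ * A ^ a = l / 2`, so that `low_freq` bounds the low part by `l / 2`.
  set A := (l / d) ^ (1 / a) with hA
  have hA0 : 0 < A := by positivity
  have hAa : A ^ a = l / d := by
    rw [hA, ← Real.rpow_mul (by positivity), one_div_mul_cancel ha0.ne', Real.rpow_one]
  have hset : ∀ ξ : Spc 3, A < ‖ξ‖ ↔ l < d * ‖ξ‖ ^ a := by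
    intro ξ
    rw [← Real.rpow_lt_rpow_iff hA0.le (norm_nonneg ξ) ha0, hAa, div_lt_iff₀ hd0, mul_comm]
  have hms : MeasurableSet {ξ : Spc 3 | ‖ξ‖ ≤ A} := measurableSet_le measurable_norm measurable_const
  have hms' : MeasurableSet {ξ : Spc 3 | A < ‖ξ‖} := measurableSet_lt measurable_const measurable_norm
  set hL := {ξ : Spc 3 | ‖ξ‖ ≤ A}.indicator h with hhL
  set hH := {ξ : Spc 3 | A < ‖ξ‖}.indicator h with hhH
  have hIL : Integrable hL := hI.indicator hms
  have hIH : Integrable hH := hI.indicator hms'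
  have hbdd : ∀ (k : Spc 3 → ℂ) (x : Spc 3), Integrable k →
      Integrable (fun ξ => k ξ * Complex.exp (2 * π * Complex.I * (inner ℝ x ξ : ℝ))) := by
    intro k x hk
    refine hk.norm.mono' (hk.aestronglyMeasurable.mul
      (Continuous.aestronglyMeasurable (by fun_prop))) (ae_of_all _ fun ξ => ?_)
    rw [norm_mul, norm_char, mul_one]
  have hsplit : ∀ x, invF h x = invF hL x + invF hH x := by
    intro x
    unfold invF
    rw [← integral_add (hbdd _ _ hIL) (hbdd _ _ hIH)]
    refine integral_congr_ae (ae_of_all _ fun ξ => ?_)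
    simp only
    rw [← add_mul]
    congr 1
    by_cases hξ : ‖ξ‖ ≤ A
    · simp [hhL, hhH, hξ]
    · simp [hhL, hhH, hξ, not_le.1 hξ]
  have hLsmall : ∀ x, ‖invF hL x‖ ≤ l / 2 := by
    intro x
    have e1 : ‖invF hL x‖ₑ ^ 2 ≤ ENNReal.ofReal ((l / 2) ^ 2) := by
      calc ‖invF hL x‖ₑ ^ 2 ≤ (∫⁻ ξ in {ξ : Spc 3 | ‖ξ‖ ≤ A}, ‖h ξ‖ₑ) ^ 2 := by
            refine pow_le_pow_left' ?_ 2
            refine (enorm_integral_le_lintegral_enorm _).trans_eq ?_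
            rw [← lintegral_indicator hms]
            refine lintegral_congr fun ξ => ?_
            rw [enorm_mul, ← ofReal_norm (Complex.exp _), norm_char, ENNReal.ofReal_one, mul_one,
              hhL, enorm_indicator_eq_indicator_enorm]
        _ ≤ _ := hlow A hA0 h hm
        _ ≤ ENNReal.ofReal (c₁ * A ^ (3 - 2 * s)) * 1 := mul_le_mul_right hN _
        _ = _ := by
            rw [mul_one]; congr 1
            rw [show 3 - 2 * s = a * (2 : ℕ) by rw [ha]; push_cast; ring,
              Real.rpow_mul_natCast hA0.le, hAa, hd, div_pow, mul_pow, Real.sq_sqrt hc₁.le]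
            field_simp
    rw [← ofReal_norm, ← ENNReal.ofReal_pow (norm_nonneg _),
      ENNReal.ofReal_le_ofReal_iff (by positivity)] at e1
    exact (sq_le_sq₀ (norm_nonneg _) (by positivity)).1 e1
  have hsub : sphM 3 {o | l < ‖invF h o‖} ≤
      sphM 3 {o | ENNReal.ofReal ((l / 2) ^ 2) ≤ ‖invF hH o‖ₑ ^ 2} := by
    refine measure_mono fun o ho => ?_
    simp only [Set.mem_ofPred_eq] at ho ⊢
    rw [← ofReal_norm, ← ENNReal.ofReal_pow (norm_nonneg _)]
    refine ENNReal.ofReal_le_ofReal ?_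
    have e1 := norm_add_le (invF hL o) (invF hH o)
    rw [← hsplit] at e1
    have e2 := hLsmall o
    have : l / 2 ≤ ‖invF hH o‖ := by linarith
    gcongr
  have hmk := mul_meas_ge_le_lintegral (μ := sphM 3)
    (f := fun o : Metric.sphere (0 : Spc 3) 1 => ‖invF hH o‖ₑ ^ 2)
    (by have := (continuous_invF hIH).measurable; fun_prop) (ENNReal.ofReal ((l / 2) ^ 2))
  have htr := hhigh A hA0 hH (hm.indicator hms') hIH (fun ξ hξ => by simp [hhH, hξ])
  have hpos : 0 < (l / 2) ^ 2 := by positivity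
  have hfin := hmk.trans htr
  rw [mul_comm, ← ENNReal.le_div_iff_mul_le (Or.inl (by simpa using hl.ne'))
    (Or.inl ENNReal.ofReal_ne_top), mul_comm, mul_div_assoc,
    ← ENNReal.ofReal_div_of_pos hpos] at hfin
  refine (hsub.trans hfin).trans_eq ?_
  rw [mul_comm]
  congr 1
  · congr 1
    have : A ^ (1 - 2 * t) = l ^ ((1 - 2 * t) / a) * d ^ (-((1 - 2 * t) / a)) := by
      rw [hA, ← Real.rpow_mul (by positivity), Real.div_rpow hl.le hd0.le, Real.rpow_neg hd0.le,
        div_eq_mul_inv, one_div_mul_eq_div]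
    rw [this, Real.rpow_sub hl, Real.rpow_two]
    field_simp
    norm_num
  · refine lintegral_congr fun ξ => ?_
    by_cases hξ : A < ‖ξ‖
    · simp only [hhH]
      rw [Set.indicator_of_mem (by exact hξ), Set.indicator_of_mem (by exact (hset ξ).1 hξ)]
    · simp only [hhH]
      rw [Set.indicator_of_notMem (by exact hξ), Set.indicator_of_notMem]
      · simp
      · exact fun h => hξ ((hset ξ).2 h)

/-- The inequality at radius `1` for data of norm at most `1`: the level-set estimate is integrated
over all heights (layer cake) and the integrals in `l` and `ξ` are exchanged. The exponent `t` lies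
strictly between `1 / 2` and `s`, the latter so that the `l`-integral converges at `0`. -/
lemma normalized_bound (s : ℝ) (hs1 : 1 / 2 < s) (hs2 : s < 3 / 2) :
    ∃ C : ℝ, 0 < C ∧ ∀ h : Spc 3 → ℂ, Measurable h → Integrable h →
      ∫⁻ ξ, ‖h ξ‖ₑ ^ 2 * ENNReal.ofReal (‖ξ‖ ^ (2 * s)) ≤ 1 →
      ∫⁻ o : Metric.sphere (0 : Spc 3) 1, ENNReal.ofReal (‖invF h o‖ ^ (2 / (3 / 2 - s))) ∂(sphM 3) ≤
        ENNReal.ofReal C := by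
  set t := (s + 1 / 2) / 2 with ht
  have ht1 : 1 / 2 < t := by linarith
  have hts : t < s := by linarith
  obtain ⟨d, K, hd, hK, hlev⟩ := level_set s hs2 t ht1
  set a := 3 / 2 - s with ha
  have ha0 : 0 < a := by linarith
  set p := 2 / a with hp
  have hp0 : 0 < p := by positivity
  set q := 2 * (s - t) / a - 1 with hq
  have hq1 : 0 < q + 1 := by
    rw [hq]; have : 0 < s - t := by linarith
    have : 0 < 2 * (s - t) / a := by positivity
    linarith
  set C := p * (K * (d ^ (q + 1) / (q + 1))) with hC
  refine ⟨C, by positivity, fun h hm hI hN => ?_⟩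
  have hcm := (continuous_invF hI).measurable
  rw [lintegral_rpow_eq_lintegral_meas_lt_mul (sphM 3) (ae_of_all _ fun o => norm_nonneg _)
    (by fun_prop) hp0]
  set W : Spc 3 → ℝ≥0∞ := fun ξ => ‖h ξ‖ₑ ^ 2 * ENNReal.ofReal (‖ξ‖ ^ (2 * t)) with hW
  have hWm : Measurable W := by fun_prop
  calc ENNReal.ofReal p * ∫⁻ l in Set.Ioi (0 : ℝ),
        sphM 3 {o | l < ‖invF h o‖} * ENNReal.ofReal (l ^ (p - 1))
      ≤ ENNReal.ofReal p * ∫⁻ l in Set.Ioi (0 : ℝ), ∫⁻ ξ,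
        {x : ℝ × Spc 3 | x.1 < d * ‖x.2‖ ^ a}.indicator
          (fun x => W x.2 * ENNReal.ofReal (K * x.1 ^ q)) (l, ξ) := by
        refine mul_le_mul_right ?_ _
        refine setLIntegral_mono' measurableSet_Ioi fun l hl => ?_
        have hl0 : (0 : ℝ) < l := hl
        refine (mul_le_mul_left (hlev h hm hI hN l hl0) _).trans_eq ?_
        rw [mul_right_comm, ← ENNReal.ofReal_mul (by positivity),
          ← lintegral_const_mul' _ _ ENNReal.ofReal_ne_top]
        refine lintegral_congr fun ξ => ?_
        have hexp : K * l ^ ((1 - 2 * t) / a - 2) * l ^ (p - 1) = K * l ^ q := by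
          rw [mul_assoc, ← Real.rpow_add hl0]
          congr 2
          rw [hp, hq]
          field_simp
          linarith
        rw [hexp]
        by_cases hξ : l < d * ‖ξ‖ ^ a
        · rw [Set.indicator_of_mem (by exact hξ), Set.indicator_of_mem (by exact hξ), mul_comm]
        · rw [Set.indicator_of_notMem (by exact hξ), Set.indicator_of_notMem (by exact hξ), mul_zero]
    _ = ENNReal.ofReal p * ∫⁻ ξ, ∫⁻ l in Set.Ioi (0 : ℝ),
        {x : ℝ × Spc 3 | x.1 < d * ‖x.2‖ ^ a}.indicator
          (fun x => W x.2 * ENNReal.ofReal (K * x.1 ^ q)) (l, ξ) := by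
        rw [lintegral_lintegral_swap]
        refine Measurable.aemeasurable ?_
        simp only [Function.uncurry_def]
        refine Measurable.indicator (by fun_prop) (measurableSet_lt (by fun_prop) (by fun_prop))
    _ = ENNReal.ofReal p * ∫⁻ ξ, W ξ * ENNReal.ofReal (K * ((d * ‖ξ‖ ^ a) ^ (q + 1) / (q + 1))) := by
        congr 1
        refine lintegral_congr fun ξ => ?_
        rw [← lintegral_rpow_Ioo K q _ hK.le (by linarith) (by positivity),
          ← lintegral_const_mul _ (by fun_prop), ← lintegral_indicator measurableSet_Ioi,
          ← lintegral_indicator measurableSet_Ioo]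
        refine lintegral_congr fun l => ?_
        by_cases hl : 0 < l
        · rw [Set.indicator_of_mem (by exact hl)]
          by_cases hξ : l < d * ‖ξ‖ ^ a
          · rw [Set.indicator_of_mem (by exact hξ), Set.indicator_of_mem (by exact ⟨hl, hξ⟩)]
          · rw [Set.indicator_of_notMem (by exact hξ), Set.indicator_of_notMem (fun h => hξ h.2)]
        · rw [Set.indicator_of_notMem (by exact hl), Set.indicator_of_notMem (fun h => hl h.1)]
    _ = ENNReal.ofReal C * ∫⁻ ξ, ‖h ξ‖ₑ ^ 2 * ENNReal.ofReal (‖ξ‖ ^ (2 * s)) := by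
        rw [hC, ENNReal.ofReal_mul hp0.le, mul_assoc]
        congr 1
        rw [← lintegral_const_mul' _ _ ENNReal.ofReal_ne_top]
        refine lintegral_congr fun ξ => ?_
        rw [hW]; simp only
        rw [mul_assoc, ← ENNReal.ofReal_mul (by positivity),
          mul_left_comm (ENNReal.ofReal _),
          ← ENNReal.ofReal_mul (by positivity)]
        congr 2
        rw [Real.mul_rpow hd.le (by positivity), ← Real.rpow_mul (norm_nonneg _)]
        have e1 : a * (q + 1) = 2 * (s - t) := by rw [hq]; field_simp; ring
        have e2 : ‖ξ‖ ^ (2 * s) = ‖ξ‖ ^ (2 * t) * ‖ξ‖ ^ (2 * (s - t)) := by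
          rw [← Real.rpow_add_of_nonneg (norm_nonneg _) (by linarith) (by linarith)]
          congr 1; ring
        rw [e1, e2]
        ring
    _ ≤ ENNReal.ofReal C * 1 := mul_le_mul_right hN _
    _ = _ := mul_one _

/-! ### Scaling and Fourier inversion -/

lemma lintegral_comp_inv_smul3 (F : Spc 3 → ℝ≥0∞) (hF : Measurable F) (r : ℝ) (hr : 0 < r) :
    ∫⁻ ξ, F (r⁻¹ • ξ) = ENNReal.ofReal (r ^ 3) * ∫⁻ ξ, F ξ := by
  have h := Measure.map_addHaar_smul (volume : Measure (Spc 3)) (inv_ne_zero hr.ne')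
  rw [← lintegral_map (f := F) (g := fun ξ : Spc 3 => r⁻¹ • ξ) hF (by fun_prop)]
  rw [show (fun ξ : Spc 3 => r⁻¹ • ξ) = (r⁻¹ • ·) from rfl, h, lintegral_smul_measure]
  simp only [finrank_euclideanSpace, Fintype.card_fin, inv_pow, inv_inv, smul_eq_mul]
  rw [abs_of_pos (by positivity)]

lemma invF_scale (w : Spc 3 → ℂ) (c r : ℝ) (hr : 0 < r) (x : Spc 3) :
    invF (fun ξ => (c : ℂ) * w (r⁻¹ • ξ)) x = ((c * r ^ 3 : ℝ) : ℂ) * invF w (r • x) := by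
  unfold invF
  have h := Measure.integral_comp_inv_smul_of_nonneg (volume : Measure (Spc 3))
    (fun η => w η * Complex.exp (2 * π * Complex.I * (inner ℝ (r • x) η : ℝ))) hr.le
  simp only [finrank_euclideanSpace, Fintype.card_fin] at h
  rw [Complex.ofReal_mul, mul_assoc (c : ℂ), ← Complex.real_smul (x := r ^ 3), ← h, ← integral_const_mul]
  refine integral_congr_ae (ae_of_all _ fun ξ => ?_)
  simp only
  rw [inner_smul_left, inner_smul_right]
  simp only [conj_trivial]
  rw [mul_inv_cancel_left₀ hr.ne', mul_assoc (c : ℂ)]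

/-- The inequality at radius `r` and for arbitrary norm `m`, deduced from `normalized_bound` by
dilation: `m⁻¹ r ^ (3 / 2 - s) invF w (r x)` is the inverse Fourier integral of
`ξ ↦ c * w (ξ / r)`. -/
lemma scaled_bound (s : ℝ) (hs1 : 1 / 2 < s) (hs2 : s < 3 / 2) :
    ∃ C : ℝ, 0 < C ∧ ∀ w : Spc 3 → ℂ, Measurable w → Integrable w → ∀ r : ℝ, 0 < r →
      ∀ m : ℝ, 0 < m →
      ∫⁻ ξ, ‖w ξ‖ₑ ^ 2 * ENNReal.ofReal (‖ξ‖ ^ (2 * s)) ≤ ENNReal.ofReal (m ^ 2) →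
      ENNReal.ofReal (r ^ (3 / 2 - s)) *
        (∫⁻ o : Metric.sphere (0 : Spc 3) 1, ‖invF w (r • (o : Spc 3))‖ₑ ^ (2 / (3 / 2 - s))
          ∂(sphM 3)) ^ (1 / (2 / (3 / 2 - s))) ≤ ENNReal.ofReal (C * m) := by
  obtain ⟨C, hC, hb⟩ := normalized_bound s hs1 hs2
  set a := 3 / 2 - s with ha
  have ha0 : 0 < a := by linarith
  set p := 2 / a with hp
  have hp0 : 0 < p := by positivity
  refine ⟨C ^ (1 / p), by positivity, fun w hw hI r hr m hm hN => ?_⟩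
  set k := m⁻¹ * r ^ a with hk
  have hk0 : 0 < k := by positivity
  set c := k / r ^ 3 with hc
  have hc0 : 0 < c := by positivity
  have hck : c * r ^ 3 = k := by rw [hc]; field_simp
  have hnorm : ∫⁻ ξ, ‖(c : ℂ) * w (r⁻¹ • ξ)‖ₑ ^ 2 * ENNReal.ofReal (‖ξ‖ ^ (2 * s)) ≤ 1 := by
    have e : ∀ ξ : Spc 3, ‖(c : ℂ) * w (r⁻¹ • ξ)‖ₑ ^ 2 * ENNReal.ofReal (‖ξ‖ ^ (2 * s)) =
        ENNReal.ofReal (c ^ 2 * r ^ (2 * s)) *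
          (‖w (r⁻¹ • ξ)‖ₑ ^ 2 * ENNReal.ofReal (‖r⁻¹ • ξ‖ ^ (2 * s))) := by
      intro ξ
      have e1 : ‖ξ‖ ^ (2 * s) = r ^ (2 * s) * ‖r⁻¹ • ξ‖ ^ (2 * s) := by
        rw [← Real.mul_rpow hr.le (norm_nonneg _), norm_smul, Real.norm_of_nonneg (by positivity),
          mul_inv_cancel_left₀ hr.ne']
      rw [e1, enorm_mul, ← ofReal_norm (c : ℂ), Complex.norm_real, Real.norm_of_nonneg hc0.le,
        ENNReal.ofReal_mul (by positivity), ENNReal.ofReal_mul (by positivity), mul_pow,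
        ENNReal.ofReal_pow hc0.le]
      ring
    simp only [e]
    rw [lintegral_const_mul' _ _ ENNReal.ofReal_ne_top, lintegral_comp_inv_smul3
      (fun ξ => ‖w ξ‖ₑ ^ 2 * ENNReal.ofReal (‖ξ‖ ^ (2 * s))) (by fun_prop) r hr, ← mul_assoc,
      ← ENNReal.ofReal_mul (by positivity)]
    refine (mul_le_mul_right hN _).trans_eq ?_
    rw [← ENNReal.ofReal_mul (by positivity), ← ENNReal.ofReal_one]
    congr 1
    have e2 : r ^ (2 * s) * (r ^ a) ^ 2 = r ^ 3 := by
      rw [← Real.rpow_mul_natCast hr.le, ← Real.rpow_add hr, ← Real.rpow_natCast r 3]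
      congr 1; rw [ha]; push_cast; ring
    rw [hc, hk]
    have hr3 : r ^ 3 ≠ 0 := by positivity
    field_simp
    rw [← e2]; ring
  have hIh : Integrable (fun ξ : Spc 3 => (c : ℂ) * w (r⁻¹ • ξ)) :=
    (hI.comp_smul (inv_ne_zero hr.ne')).const_mul _
  have hmain := hb _ (by fun_prop) hIh hnorm
  simp only [invF_scale w c r hr, hck] at hmain
  have e3 : ∀ o : Metric.sphere (0 : Spc 3) 1,
      ENNReal.ofReal (‖(k : ℂ) * invF w (r • (o : Spc 3))‖ ^ p) =
        ENNReal.ofReal k ^ p * ‖invF w (r • (o : Spc 3))‖ₑ ^ p := by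
    intro o
    rw [← ENNReal.ofReal_rpow_of_nonneg (norm_nonneg _) hp0.le, ofReal_norm, enorm_mul,
      ENNReal.mul_rpow_of_nonneg _ _ hp0.le, ← ofReal_norm (k : ℂ), Complex.norm_real,
      Real.norm_of_nonneg hk0.le]
  simp only [e3] at hmain
  rw [lintegral_const_mul' _ _ (ENNReal.rpow_ne_top_of_nonneg hp0.le ENNReal.ofReal_ne_top)] at hmain
  have h4 := ENNReal.rpow_le_rpow hmain (show 0 ≤ 1 / p by positivity)
  rw [ENNReal.mul_rpow_of_nonneg _ _ (by positivity), ← ENNReal.rpow_mul, mul_one_div_cancel hp0.ne',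
    ENNReal.rpow_one, ENNReal.ofReal_rpow_of_nonneg hC.le (by positivity)] at h4
  have h5 := mul_le_mul_right h4 (ENNReal.ofReal m)
  rw [← mul_assoc, ← ENNReal.ofReal_mul hm.le, ← ENNReal.ofReal_mul hm.le, hk,
    mul_inv_cancel_left₀ hm.ne', mul_comm m] at h5
  exact h5

/-- Integrability of the Fourier transform and Fourier inversion for test functions. -/
lemma fourierS_facts {v : Spc 3 → ℝ} (hv : ContDiff ℝ ∞ v) (hc : HasCompactSupport v) :
    Continuous (fourierS v) ∧ Integrable (fourierS v) ∧ ∀ x, invF (fourierS v) x = v x := by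
  have hv' : ContDiff ℝ ∞ (fun x => (v x : ℂ)) := Complex.ofRealCLM.contDiff.comp hv
  have hc' : HasCompactSupport (fun x => (v x : ℂ)) := hc.comp_left (g := fun y : ℝ => (y : ℂ)) (by simp)
  set φ := hc'.toSchwartzMap hv' with hφ
  set ψ : SchwartzMap (Spc 3) ℂ := 𝓕 φ with hψ
  have e : fourierS v = ⇑ψ := by
    rw [hψ, SchwartzMap.fourier_coe]; rfl
  have hI : Integrable (fourierS v) := by rw [e]; exact ψ.integrable
  refine ⟨by rw [e]; exact ψ.continuous, hI, fun x => ?_⟩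
  have hinv := Continuous.fourierInv_fourier_eq (f := fun x => (v x : ℂ)) hv'.continuous φ.integrable hI
  have h2 := congrFun hinv x
  rw [Real.fourierInv_eq'] at h2
  rw [← h2]
  unfold invF fourierS
  refine integral_congr_ae (ae_of_all _ fun ξ => ?_)
  simp only [smul_eq_mul]
  rw [mul_comm, real_inner_comm]
  congr 2
  push_cast
  ring

lemma DsN_sq (s : ℝ) (v : Spc 3 → ℝ) :
    DsN s v ^ 2 = ∫⁻ ξ, ‖fourierS v ξ‖ₑ ^ 2 * ENNReal.ofReal (‖ξ‖ ^ (2 * s)) := by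
  unfold DsN
  rw [eLpNorm_eq_lintegral_rpow_enorm_toReal (by norm_num) (by norm_num), ← ENNReal.rpow_two,
    ← ENNReal.rpow_mul]
  simp only [ENNReal.toReal_ofNat]
  norm_num
  refine lintegral_congr fun ξ => ?_
  rw [mul_pow, mul_comm, Real.enorm_of_nonneg (by positivity), ← ENNReal.ofReal_pow (by positivity),
    ← Real.rpow_mul_natCast (by positivity), mul_comm s]
  norm_num

/-- The fractional trace-type inequality (3.25) of Lemma 3.4 (i). -/
theorem trace_inequality_fractional (s p : ℝ) (hs1 : 1/2 < s) (hs2 : s < 3/2)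
    (hp : 2/p = 3/2 - s) :
    ∃ C > (0 : ℝ), ∀ v : Spc 3 → ℝ, ContDiff ℝ ∞ v → HasCompactSupport v →
      ∀ r : ℝ, 0 < r →
        ENNReal.ofReal (r ^ (3/2 - s)) * sphN 3 p v r ≤ ENNReal.ofReal C * DsN s v := by
  obtain ⟨C, hC, hb⟩ := scaled_bound s hs1 hs2
  have ha0 : 0 < 3 / 2 - s := by linarith
  have hp' : p = 2 / (3 / 2 - s) := by
    have hp0 : p ≠ 0 := by rintro rfl; simp at hp; linarith
    rw [← hp]; field_simp
  refine ⟨C, hC, fun v hv hc r hr => ?_⟩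
  obtain ⟨hcont, hI, hinv⟩ := fourierS_facts hv hc
  by_cases htop : DsN s v = ⊤
  · rw [htop, ENNReal.mul_top (by simpa using hC)]
    exact le_top
  have hb' : ∀ m : ℝ, 0 < m → DsN s v ≤ ENNReal.ofReal m →
      ENNReal.ofReal (r ^ (3/2 - s)) * sphN 3 p v r ≤ ENNReal.ofReal (C * m) := by
    intro m hm hDm
    have h1 := hb (fourierS v) hcont.measurable hI r hr m hm (by
      rw [← DsN_sq, ENNReal.ofReal_pow hm.le]
      exact pow_le_pow_left' hDm 2)
    rw [← hp'] at h1
    refine le_trans (le_of_eq ?_) h1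
    unfold sphN
    congr 2
    refine lintegral_congr fun o => ?_
    rw [hinv, ← enorm_eq_nnnorm, ← ofReal_norm, ← ofReal_norm, Complex.norm_real]
  -- `DsN s v` may vanish, so it is approached from above by positive reals.
  refine ENNReal.le_of_forall_pos_le_add fun ε hε _ => ?_
  set D := (DsN s v).toReal with hD
  have hDD : DsN s v = ENNReal.ofReal D := (ENNReal.ofReal_toReal htop).symm
  have hD0 : 0 ≤ D := ENNReal.toReal_nonneg
  have hε' : (0 : ℝ) < ε := hε
  refine (hb' (D + ε / C) (by positivity) ?_).trans_eq ?_
  · rw [hDD]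
    exact ENNReal.ofReal_le_ofReal (le_add_of_nonneg_right (by positivity))
  · rw [mul_add, mul_div_cancel₀ _ hC.ne', ENNReal.ofReal_add (by positivity) hε'.le, hDD,
      ENNReal.ofReal_mul hC.le, ENNReal.ofReal_coe_nnreal]
end
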